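/- Under the standing assumption P_π(A_1=0)=0 and P_π(B_1=0)<1, the following assertions are equivalent in the Markov-modulated setting: (a) Ψ_1∘…∘Ψ_n(0) converges a.s. to Z_∞=∑_{n≥1}Π_{n-1}B_n and Z_∞ is a proper random variable; (b) Π_{τ_n(i)}→0 a.s. and E_i J_i(log⁺ W^i)<∞ for some (equivalently, all) i∈S; (c) P_i(|Π_{τ(i)}|=1)<1 for some (equivalently, all) i∈S and limsup_{n→∞}|Π_{n-1}B_n|<∞ a.s.; (d) Π_{n-1}B_n→0 a.s.; (e) ∑_{n≥1}|Π_{n-1}B_n|<∞ a.s. Furthermore, Ψ_1∘…∘Ψ_n(Z_0) converges a.s. to a proper random variable for every admissible Z_0 if and only if Π_n→0 a.s. and E_i J_i(log⁺ W^i)<∞ for some (equivalently, all) i∈S; in that case the limit always equals Z_∞. -/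

import Mathlib

open MeasureTheory ProbabilityTheory Filter
open scoped ENNReal NNReal Topology

noncomputable section

namespace Perpetuities

/-- The positive part of the logarithm, with the convention `log⁺ 0 = 0`. -/
def logplus (x : ℝ) : ℝ := max (Real.log x) 0

/-- Weak convergence of a sequence of (probability) measures on `ℝ`. -/
def WeakLim (μ : ℕ → Measure ℝ) (ν : Measure ℝ) : Prop :=
  ∀ f : BoundedContinuousFunction ℝ ℝ,
    Tendsto (fun n => ∫ x, f x ∂ μ n) atTop (nhds (∫ x, f x ∂ ν))

/-- `|f n| → ∞` in `μ`-probability. -/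
def TendstoInfInMeasure {Ω : Type*} [MeasurableSpace Ω] (μ : Measure Ω) (f : ℕ → Ω → ℝ) : Prop :=
  ∀ x : ℝ, 0 < x → Tendsto (fun n => μ {ω | |f n ω| ≤ x}) atTop (nhds 0)

/-- `d` is the lattice span (period) of the distribution of the `ℕ`-valued random
variable `T` under `μ`, i.e. `d` is the greatest common divisor of the support. -/
def LatticeSpan {Ω : Type*} [MeasurableSpace Ω] (μ : Measure Ω) (T : Ω → ℕ) (d : ℕ) : Prop :=
  (∀ n, 0 < μ {ω | T ω = n} → d ∣ n) ∧ ∀ e : ℕ, (∀ n, 0 < μ {ω | T ω = n} → e ∣ n) → e ∣ d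

/-- The Markov-modulated setting: an ergodic (irreducible, aperiodic, positive recurrent)
Markov chain `M` on a countable state space `S` with transition matrix `p` and stationary
distribution `π`, modulating a sequence `(A_n, B_n)_{n ≥ 1}` of real random pairs (indexed
here so that `A n`, `B n` are the paper's `A_{n+1}`, `B_{n+1}`): conditionally on the whole
path of the chain, the pairs are independent and the conditional law of `(A_{n+1}, B_{n+1})`
given the path depends only on `(M_n, M_{n+1})`, via the stochastic kernel `K`.
`P i` is the underlying probability measure conditioned on `M 0 = i`. -/
structure MMSetting (S : Type*) (Ω : Type*) [MeasurableSpace S] [MeasurableSingletonClass S]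
    [Countable S] [MeasurableSpace Ω] where
  P : S → Measure Ω
  prob : ∀ i, IsProbabilityMeasure (P i)
  π : S → ℝ≥0∞
  πsum : ∑' i, π i = 1
  πpos : ∀ i, 0 < π i
  p : S → S → ℝ≥0∞
  psum : ∀ i, ∑' j, p i j = 1
  stationary : ∀ j, ∑' i, π i * p i j = π j
  K : S → S → Measure (ℝ × ℝ)
  Kprob : ∀ i j, IsProbabilityMeasure (K i j)
  M : ℕ → Ω → S
  A : ℕ → Ω → ℝ
  B : ℕ → Ω → ℝ
  measM : ∀ n, Measurable (M n)
  measA : ∀ n, Measurable (A n)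
  measB : ∀ n, Measurable (B n)
  start : ∀ i, P i {ω | M 0 ω = i} = 1
  chain : ∀ (i : S) (n : ℕ) (path : ℕ → S), path 0 = i →
    P i (⋂ k ∈ Finset.range (n + 1), {ω | M k ω = path k})
      = ∏ k ∈ Finset.range n, p (path k) (path (k + 1))
  modulated : ∀ (i : S) (n : ℕ) (path : ℕ → S) (E : ℕ → Set (ℝ × ℝ)), path 0 = i →
    (∀ k, MeasurableSet (E k)) →
    P i ((⋂ k ∈ Finset.range (n + 1), {ω | M k ω = path k}) ∩
        ⋂ k ∈ Finset.range n, {ω | (A k ω, B k ω) ∈ E k})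
      = P i (⋂ k ∈ Finset.range (n + 1), {ω | M k ω = path k})
        * ∏ k ∈ Finset.range n, K (path k) (path (k + 1)) (E k)
  irreducible : ∀ i j, ∃ n, 0 < P i {ω | M n ω = j}
  recurrent : ∀ i, P i {ω | ∃ n, 0 < n ∧ M n ω = i} = 1
  posRecurrent : ∀ i, ∫⁻ ω, ((sInf {n | 0 < n ∧ M n ω = i} : ℕ) : ℝ≥0∞) ∂ P i < ⊤
  aperiodic : ∀ (i : S) (d : ℕ), (∀ n, 0 < n → 0 < P i {ω | M n ω = i} → d ∣ n) → d = 1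

namespace MMSetting

variable {S : Type*} [MeasurableSpace S] [MeasurableSingletonClass S] [Countable S]
variable {Ω : Type*} [MeasurableSpace Ω]
variable (X : MMSetting S Ω)

/-- `Pπ = ∑ i, π i • P i`, the stationary (unconditional) probability measure. -/
def Pπ : Measure Ω := Measure.sum fun i => X.π i • X.P i

/-- `Pprod n = Π_n = A_1 ⋯ A_n`, with `Π_0 = 1`. -/
def Pprod (n : ℕ) (ω : Ω) : ℝ := ∏ k ∈ Finset.range n, X.A k ω

/-- `Ssum n = ∑_{k=1}^n Π_{k-1} B_k`, the value `Ψ_1 ∘ ⋯ ∘ Ψ_n (0)` of the backward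
iteration started at `0`. -/
def Ssum (n : ℕ) (ω : Ω) : ℝ := ∑ k ∈ Finset.range n, X.Pprod k ω * X.B k ω

/-- `Zb Z n = Ψ_1 ∘ ⋯ ∘ Ψ_n (Z) = Π_n Z + ∑_{k=1}^n Π_{k-1} B_k`, the backward iteration. -/
def Zb (Z : Ω → ℝ) (n : ℕ) (ω : Ω) : ℝ := X.Pprod n ω * Z ω + X.Ssum n ω

/-- `Zf Z n = Ψ_n ∘ ⋯ ∘ Ψ_1 (Z)`, the forward iteration. -/
def Zf (Z : Ω → ℝ) : ℕ → Ω → ℝ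
  | 0 => Z
  | n + 1 => fun ω => X.A n ω * Zf Z n ω + X.B n ω

/-- The perpetuity `Z_∞ = ∑_{n ≥ 1} Π_{n-1} B_n`. -/
def Zinf (ω : Ω) : ℝ := ∑' n, X.Pprod n ω * X.B n ω

/-- `tau i n = τ_n(i)`, the `n`-th return time of the driving chain to the state `i`
(`τ_0(i) = 0`). -/
def tau (i : S) : ℕ → Ω → ℕ
  | 0 => fun _ => 0
  | n + 1 => fun ω => sInf {k | tau i n ω < k ∧ X.M k ω = i}

/-- `A_1^i = Π_{τ(i)}`. -/
def Ai (i : S) (ω : Ω) : ℝ := X.Pprod (X.tau i 1 ω) ω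

/-- `B_1^i = ∑_{k=1}^{τ(i)} Π_{k-1} B_k`. -/
def Bi (i : S) (ω : Ω) : ℝ := X.Ssum (X.tau i 1 ω) ω

/-- `W^i = max_{1 ≤ k ≤ τ(i)} |Π_{k-1} B_k|`. -/
def Wi (i : S) (ω : Ω) : ℝ :=
  (((Finset.range (X.tau i 1 ω)).sup fun k => ‖X.Pprod k ω * X.B k ω‖₊ : ℝ≥0) : ℝ)

/-- `S_{τ(i)} = - log |Π_{τ(i)}|`. -/
def Stau (i : S) (ω : Ω) : ℝ := - Real.log |X.Ai i ω|

/-- The function `J_i`: `J_i(0) = 1`, and for `x > 0`, `J_i(x) = x / E_i (S_{τ(i)}⁺ ∧ x)`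
if `P_i(S_{τ(i)} ≤ 0) < 1`, and `J_i(x) = x` otherwise. -/
def Ji (i : S) (x : ℝ) : ℝ :=
  if x = 0 then 1
  else if X.P i {ω | X.Stau i ω ≤ 0} < 1 then
    x / ∫ ω, min (max (X.Stau i ω) 0) x ∂ X.P i
  else x

/-- `τ̂(i) = inf {k ≥ 1 : M_k = i, Π_k = 1}`. -/
def hatτ (i : S) (ω : Ω) : ℕ := sInf {k | 0 < k ∧ X.M k ω = i ∧ X.Pprod k ω = 1}

/-- `Z` is an admissible initial value: it is (conditionally on `M 0`, i.e. under each `P i`)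
independent of the modulated sequence `(M_n, A_n, B_n)_{n ≥ 1}`. -/
def Admissible (Z : Ω → ℝ) : Prop :=
  Measurable Z ∧
    ∀ i : S, IndepFun Z (fun ω => fun n : ℕ => (X.M (n + 1) ω, X.A n ω, X.B n ω)) (X.P i)

/-- The degeneracy condition: `A_1 c_{M_1} + B_1 = c_{M_0}` a.s. for the family `c`. -/
def DegenD (c : S → ℝ) : Prop :=
  ∀ᵐ ω ∂ X.Pπ, X.A 0 ω * c (X.M 1 ω) + X.B 0 ω = c (X.M 0 ω)

/-- The dual degeneracy condition: `A_1 c_{M_0} + B_1 = c_{M_1}` a.s. for the family `c`. -/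
def DegenDdual (c : S → ℝ) : Prop :=
  ∀ᵐ ω ∂ X.Pπ, X.A 0 ω * c (X.M 0 ω) + X.B 0 ω = c (X.M 1 ω)

end MMSetting

end Perpetuities

namespace PerpAux

section IID
variable {E : Type*} [MeasurableSpace E]

/-- iid product law. -/
abbrev iidQ (μ : Measure E) [IsProbabilityMeasure μ] : Measure (ℕ → E) :=
  Measure.infinitePi (fun _ : ℕ => μ)

/-- shift. -/
def shf {E : Type*} (n : ℕ) (x : ℕ → E) : ℕ → E := fun k => x (n + k)

/-- glueing of two sequences at time `n`. -/
def glue {E : Type*} (n : ℕ) (z : (ℕ → E) × (ℕ → E)) : ℕ → E :=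
  fun k => if k < n then z.1 k else z.2 (k - n)

lemma measurable_shf (n : ℕ) : Measurable (shf n : (ℕ → E) → (ℕ → E)) :=
  measurable_pi_lambda _ fun _ => measurable_pi_apply _

lemma measurable_glue (n : ℕ) : Measurable (glue n : (ℕ → E) × (ℕ → E) → (ℕ → E)) := by
  refine measurable_pi_lambda _ fun k => ?_
  unfold glue
  split_ifs with h <;> fun_prop

lemma glue_law (μ : Measure E) [IsProbabilityMeasure μ] (n : ℕ) :
    ((iidQ μ).prod (iidQ μ)).map (glue n) = iidQ μ := by
  refine Measure.eq_infinitePi _ fun s t ht => ?_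
  have hs : MeasurableSet (Set.pi (s : Set ℕ) t) :=
    MeasurableSet.pi s.countable_toSet fun i _ => ht i
  rw [Measure.map_apply (measurable_glue n) hs]
  have : glue n ⁻¹' (Set.pi (s : Set ℕ) t) =
      (Set.pi ((s.filter (· < n) : Finset ℕ) : Set ℕ) t) ×ˢ
      (Set.pi (((s.filter (¬ · < n)).image (· - n) : Finset ℕ) : Set ℕ) (fun k => t (n + k))) := by
    ext z
    simp only [Set.mem_preimage, Set.mem_pi, Finset.mem_coe, glue, Set.mem_prod, Finset.mem_filter,
      Finset.mem_image]
    constructor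
    · intro h
      refine ⟨fun k hk => by simpa [hk.2] using h k hk.1, ?_⟩
      rintro k ⟨j, hj, rfl⟩
      have := h j hj.1
      rw [if_neg hj.2] at this
      rwa [Nat.add_sub_cancel' (not_lt.mp hj.2)]
    · rintro ⟨h1, h2⟩ k hk
      split_ifs with hkn
      · exact h1 k ⟨hk, hkn⟩
      · have := h2 (k - n) ⟨k, ⟨hk, hkn⟩, rfl⟩
        rwa [Nat.add_sub_cancel' (not_lt.mp hkn)] at this
  rw [this, Measure.prod_prod, Measure.infinitePi_pi _ (fun i _ => ht i),
    Measure.infinitePi_pi _ (fun i _ => ht _), Finset.prod_image,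
    ← Finset.prod_filter_mul_prod_filter_not s (· < n)]
  · congr 1
    refine Finset.prod_congr rfl fun k hk => ?_
    rw [Nat.add_sub_cancel' (not_lt.mp (Finset.mem_filter.mp hk).2)]
  · intro a ha b hb hab
    simp only [Finset.coe_filter, Set.mem_ofPred_eq] at ha hb hab
    omega

lemma lint_fub (μ : Measure E) [IsProbabilityMeasure μ] (n : ℕ)
    (F : (ℕ → E) → (ℕ → E) → ℝ≥0∞) (hF : Measurable (Function.uncurry F))
    (hdep : ∀ x x' y, (∀ k < n, x k = x' k) → F x y = F x' y) :
    ∫⁻ x, F x (shf n x) ∂(iidQ μ) = ∫⁻ x, ∫⁻ y, F x y ∂(iidQ μ) ∂(iidQ μ) := by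
  have hm : Measurable fun x => F x (shf n x) :=
    hF.comp (measurable_id.prodMk (measurable_shf n))
  conv_lhs => rw [← glue_law μ n]
  rw [lintegral_map hm (measurable_glue n)]
  rw [← lintegral_prod (fun z => F z.1 z.2) hF.aemeasurable]
  refine lintegral_congr fun z => ?_
  have : shf n (glue n z) = z.2 := by
    ext k; simp [shf, glue]
  rw [this]
  exact hdep _ _ _ fun k hk => by simp [glue, hk]

/-- Set version: independent past and future. -/
lemma meas_fub (μ : Measure E) [IsProbabilityMeasure μ] (n : ℕ)
    (H : Set ((ℕ → E) × (ℕ → E))) (hH : MeasurableSet H)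
    (hdep : ∀ x x' y, (∀ k < n, x k = x' k) → ((x, y) ∈ H ↔ (x', y) ∈ H)) :
    iidQ μ {x | (x, shf n x) ∈ H} = ∫⁻ x, iidQ μ {y | (x, y) ∈ H} ∂(iidQ μ) := by
  have := lint_fub μ n (fun x y => H.indicator 1 (x, y))
    ((measurable_one.indicator hH)) (fun x x' y h => by
      by_cases h1 : (x, y) ∈ H
      · rw [Set.indicator_of_mem h1, Set.indicator_of_mem ((hdep x x' y h).1 h1)]; rfl
      · rw [Set.indicator_of_notMem h1, Set.indicator_of_notMem (fun h2 => h1 ((hdep x x' y h).2 h2))])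
  have e1 : ∀ x, ∫⁻ y, H.indicator (1 : (ℕ → E) × (ℕ → E) → ℝ≥0∞) (x, y) ∂(iidQ μ) = iidQ μ {y | (x, y) ∈ H} := by
    intro x
    have hm : MeasurableSet {y | (x, y) ∈ H} := measurable_prodMk_left hH
    rw [← lintegral_indicator_one hm]
    rfl
  simp_rw [e1] at this
  have hm : MeasurableSet {x : ℕ → E | (x, shf n x) ∈ H} :=
    (measurable_id.prodMk (measurable_shf n)) hH
  rw [← this, ← lintegral_indicator_one hm]
  rfl

lemma meas_indep (μ : Measure E) [IsProbabilityMeasure μ] (n : ℕ)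
    (G H : Set (ℕ → E)) (hG : MeasurableSet G) (hH : MeasurableSet H)
    (hdep : ∀ x x', (∀ k < n, x k = x' k) → (x ∈ G ↔ x' ∈ G)) :
    iidQ μ (G ∩ shf n ⁻¹' H) = iidQ μ G * iidQ μ H := by
  have := meas_fub μ n (G ×ˢ H) (hG.prod hH) (fun x x' y h => by
    simp only [Set.mem_prod]; rw [hdep x x' h])
  have e : {x : ℕ → E | (x, shf n x) ∈ G ×ˢ H} = G ∩ shf n ⁻¹' H := by ext; simp
  rw [e] at this
  rw [this]
  have : ∀ x, iidQ μ {y | (x, y) ∈ G ×ˢ H} = G.indicator (fun _ => iidQ μ H) x := by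
    intro x
    by_cases h : x ∈ G <;> simp [h]
  simp_rw [this]
  rw [lintegral_indicator hG, lintegral_const, mul_comm]
  simp

lemma shf_law (μ : Measure E) [IsProbabilityMeasure μ] (n : ℕ) :
    MeasurePreserving (shf n) (iidQ μ) (iidQ μ) := by
  refine ⟨measurable_shf n, ?_⟩
  ext H hH
  rw [Measure.map_apply (measurable_shf n) hH]
  simpa using meas_indep μ n Set.univ H MeasurableSet.univ hH (by simp)

lemma coord_law (μ : Measure E) [IsProbabilityMeasure μ] (n : ℕ) :
    MeasurePreserving (fun x : ℕ → E => x n) (iidQ μ) μ :=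
  measurePreserving_eval_infinitePi (fun _ : ℕ => μ) n

/-- reversal of first `n` coordinates -/
def rvs {E : Type*} (n : ℕ) (x : ℕ → E) : ℕ → E := fun k => x (if k < n then n - 1 - k else k)

lemma rvs_law (μ : Measure E) [IsProbabilityMeasure μ] (n : ℕ) :
    MeasurePreserving (rvs n) (iidQ μ) (iidQ μ) := by
  have hm : Measurable (rvs n : (ℕ → E) → (ℕ → E)) :=
    measurable_pi_lambda _ fun k => measurable_pi_apply _
  refine ⟨hm, ?_⟩
  refine Measure.eq_infinitePi _ fun s t ht => ?_
  have hs : MeasurableSet (Set.pi (s : Set ℕ) t) :=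
    MeasurableSet.pi s.countable_toSet fun i _ => ht i
  rw [Measure.map_apply hm hs]
  set σ : ℕ → ℕ := fun k => if k < n then n - 1 - k else k with hσ
  have hinv : ∀ k, σ (σ k) = k := by
    intro k; simp only [hσ]; split_ifs <;> omega
  have : rvs n ⁻¹' (Set.pi (s : Set ℕ) t) =
      Set.pi ((s.image σ : Finset ℕ) : Set ℕ) (fun k => t (σ k)) := by
    ext x
    simp only [Set.mem_preimage, Set.mem_pi, Finset.mem_coe, Finset.mem_image]
    constructor
    · rintro h k ⟨j, hj, rfl⟩
      rw [hinv]; exact h j hj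
    · intro h k hk
      have := h (σ k) ⟨k, hk, rfl⟩
      rwa [hinv] at this
  rw [this, Measure.infinitePi_pi _ (fun i _ => ht _), Finset.prod_image]
  · simp_rw [hinv]
  · intro a _ b _ hab
    rw [← hinv a, ← hinv b, hab]

/-- random walk -/
def wk {E : Type*} (ξ : E → ℝ) (n : ℕ) (x : ℕ → E) : ℝ := ∑ k ∈ Finset.range n, ξ (x k)

@[simp] lemma wk_zero {E : Type*} (ξ : E → ℝ) (x : ℕ → E) : wk ξ 0 x = 0 := by simp [wk]

lemma wk_succ {E : Type*} (ξ : E → ℝ) (n : ℕ) (x : ℕ → E) : wk ξ (n + 1) x = wk ξ n x + ξ (x n) := by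
  simp [wk, Finset.sum_range_succ]

lemma wk_add {E : Type*} (ξ : E → ℝ) (n m : ℕ) (x : ℕ → E) :
    wk ξ (n + m) x = wk ξ n x + wk ξ m (shf n x) := by
  simp only [wk, shf]; exact Finset.sum_range_add _ _ _

lemma wk_congr {E : Type*} (ξ : E → ℝ) {n : ℕ} {x x' : ℕ → E} (h : ∀ k < n, x k = x' k) :
    wk ξ n x = wk ξ n x' :=
  Finset.sum_congr rfl fun k hk => by rw [h k (Finset.mem_range.mp hk)]

lemma measurable_wk {ξ : E → ℝ} (hξ : Measurable ξ) (n : ℕ) : Measurable (wk ξ n) := by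
  unfold wk
  exact Finset.measurable_sum _ fun k _ => hξ.comp (measurable_pi_apply k)

lemma wk_rvs {E : Type*} (ξ : E → ℝ) (n k : ℕ) (hk : k ≤ n) (x : ℕ → E) :
    wk ξ k (rvs n x) = wk ξ n x - wk ξ (n - k) x := by
  induction k with
  | zero => simp
  | succ k ih =>
    rw [wk_succ, ih (by omega)]
    have h1 : n - k = (n - (k + 1)) + 1 := by omega
    rw [h1, wk_succ]
    have h2 : rvs n x k = x (n - (k + 1)) := by
      simp only [rvs]; rw [if_pos (by omega)]; congr 1; omega
    rw [h2]; ring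

end IID
end PerpAux

namespace PerpAux

section IID2
variable {E : Type*} [MeasurableSpace E]

lemma lint_fub_coord (μ : Measure E) [IsProbabilityMeasure μ] (n : ℕ)
    (f : (ℕ → E) → E → ℝ≥0∞) (hf : Measurable (Function.uncurry f))
    (hdep : ∀ x x' e, (∀ k < n, x k = x' k) → f x e = f x' e) :
    ∫⁻ x, f x (x n) ∂(iidQ μ) = ∫⁻ e, ∫⁻ x, f x e ∂(iidQ μ) ∂μ := by
  have hF : Measurable (Function.uncurry (fun (x y : ℕ → E) => f x (y 0))) :=
    hf.comp (measurable_fst.prodMk ((measurable_pi_apply 0).comp measurable_snd))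
  have h := lint_fub μ n (fun x y => f x (y 0)) hF (fun x x' y h => hdep x x' _ h)
  have e1 : ∀ x : ℕ → E, shf n x 0 = x n := fun x => by simp [shf]
  simp_rw [e1] at h
  rw [h, lintegral_lintegral_swap hF.aemeasurable]
  have hg : Measurable (fun e => ∫⁻ x, f x e ∂(iidQ μ)) :=
    Measurable.lintegral_prod_left' (f := fun z : (ℕ → E) × E => f z.1 z.2) hf
  exact (coord_law μ 0).lintegral_comp hg

/-- truncated mean -/
def trA (μ : Measure E) (ξ : E → ℝ) (y : ℝ) : ℝ := ∫ e, min (max (ξ e) 0) y ∂μ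

lemma trA_integrable (μ : Measure E) [IsProbabilityMeasure μ] {ξ : E → ℝ} (hξ : Measurable ξ)
    (y : ℝ) : Integrable (fun e => min (max (ξ e) 0) y) μ := by
  refine Integrable.mono' (integrable_const |y|) ?_ (Eventually.of_forall fun e => ?_)
  · exact ((hξ.max measurable_const).min measurable_const).aestronglyMeasurable
  · rw [Real.norm_eq_abs, abs_le]
    have := le_max_right (ξ e) 0
    refine ⟨le_min (by linarith [abs_nonneg y]) (neg_abs_le y), (min_le_right _ _).trans (le_abs_self y)⟩

lemma trA_mono (μ : Measure E) [IsProbabilityMeasure μ] {ξ : E → ℝ} (hξ : Measurable ξ) :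
    Monotone (trA μ ξ) := fun _ _ h =>
  integral_mono (trA_integrable μ hξ _) (trA_integrable μ hξ _)
    (fun _ => min_le_min_left _ h)

lemma trA_nonneg (μ : Measure E) {ξ : E → ℝ} {y : ℝ} (hy : 0 ≤ y) :
    0 ≤ trA μ ξ y := integral_nonneg fun _ => le_min (le_max_right _ _) hy

lemma trA_ofReal (μ : Measure E) [IsProbabilityMeasure μ] {ξ : E → ℝ} (hξ : Measurable ξ)
    {y : ℝ} (hy : 0 ≤ y) :
    ENNReal.ofReal (trA μ ξ y) = ∫⁻ e, ENNReal.ofReal (min (max (ξ e) 0) y) ∂μ :=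
  ofReal_integral_eq_lintegral_ofReal (trA_integrable μ hξ y)
    (Eventually.of_forall fun _ => le_min (le_max_right _ _) hy)

lemma trA_lower (μ : Measure E) [IsProbabilityMeasure μ] {ξ : E → ℝ} (hξ : Measurable ξ)
    (hpos : μ {e | 0 < ξ e} ≠ 0) :
    ∃ δ > 0, ∃ q > 0, ∀ y > 0, min δ y * q ≤ trA μ ξ y := by
  have : ∃ k : ℕ, μ {e | 1 / ((k : ℝ) + 1) < ξ e} ≠ 0 := by
    by_contra! h
    apply hpos
    refine measure_mono_null (t := ⋃ k : ℕ, {e | 1 / ((k : ℝ) + 1) < ξ e}) ?_ (measure_iUnion_null h)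
    intro e he
    obtain ⟨k, hk⟩ := exists_nat_one_div_lt (show (0:ℝ) < ξ e from he)
    exact Set.mem_iUnion.2 ⟨k, hk⟩
  obtain ⟨k, hk⟩ := this
  set δ : ℝ := 1 / ((k : ℝ) + 1)
  have hδ : 0 < δ := by positivity
  have hms : MeasurableSet {e | δ < ξ e} := measurableSet_lt measurable_const hξ
  refine ⟨δ, hδ, μ.real {e | δ < ξ e}, ?_, fun y hy => ?_⟩
  · exact ENNReal.toReal_pos hk (measure_ne_top _ _)
  · have : min δ y * μ.real {e | δ < ξ e} = ∫ e, ({e | δ < ξ e} : Set E).indicator (fun _ => min δ y) e ∂μ := by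
      rw [integral_indicator hms]; simp [mul_comm]
    rw [this]
    refine integral_mono ((integrable_const _).indicator hms) (trA_integrable μ hξ y) fun e => ?_
    by_cases he : e ∈ {e | δ < ξ e}
    · simp only [Set.indicator_of_mem he]
      exact min_le_min_right _ ((le_of_lt he).trans (le_max_left _ _))
    · simp only [Set.indicator_of_notMem he]
      exact le_min (le_max_right _ _) hy.le

lemma trA_pos (μ : Measure E) [IsProbabilityMeasure μ] {ξ : E → ℝ} (hξ : Measurable ξ)
    (hpos : μ {e | 0 < ξ e} ≠ 0) {y : ℝ} (hy : 0 < y) : 0 < trA μ ξ y := by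
  obtain ⟨δ, hδ, q, hq, h⟩ := trA_lower μ hξ hpos
  exact lt_of_lt_of_le (mul_pos (lt_min hδ hy) hq) (h y hy)

/-- `J` for positive arguments -/
def Jr (μ : Measure E) (ξ : E → ℝ) (y : ℝ) : ℝ := y / trA μ ξ y

lemma Jr_linear (μ : Measure E) [IsProbabilityMeasure μ] {ξ : E → ℝ} (hξ : Measurable ξ)
    (hpos : μ {e | 0 < ξ e} ≠ 0) : ∃ C > 0, ∀ y > 0, Jr μ ξ y ≤ C * (1 + y) := by
  obtain ⟨δ, hδ, q, hq, h⟩ := trA_lower μ hξ hpos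
  refine ⟨1 / q * (1 + 1 / δ), by positivity, fun y hy => ?_⟩
  have hA := trA_pos μ hξ hpos hy
  rw [Jr, div_le_iff₀ hA]
  have h1 : 1 / q * (1 + 1 / δ) * (1 + y) * (min δ y * q) ≤ 1 / q * (1 + 1 / δ) * (1 + y) * trA μ ξ y :=
    mul_le_mul_of_nonneg_left (h y hy) (by positivity)
  refine le_trans ?_ h1
  have h2 : 1 / q * (1 + 1 / δ) * (1 + y) * (min δ y * q) = (1 + 1 / δ) * (1 + y) * min δ y := by
    field_simp
  rw [h2]
  rcases le_total δ y with h3 | h3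
  · rw [min_eq_left h3]
    have : (1 + 1 / δ) * (1 + y) * δ = (δ + 1) * (1 + y) := by field_simp
    rw [this]; nlinarith
  · rw [min_eq_right h3]
    have : 1 ≤ (1 + 1 / δ) * (1 + y) := by
      have : 0 < 1 / δ := by positivity
      nlinarith
    nlinarith

lemma Jr_nonneg (μ : Measure E) {ξ : E → ℝ} {y : ℝ} (hy : 0 ≤ y) : 0 ≤ Jr μ ξ y :=
  div_nonneg hy (trA_nonneg μ hy)

lemma Jr_add (μ : Measure E) [IsProbabilityMeasure μ] {ξ : E → ℝ} (hξ : Measurable ξ)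
    (hpos : μ {e | 0 < ξ e} ≠ 0) {y z : ℝ} (hy : 0 < y) (hz : 0 < z) :
    Jr μ ξ (y + z) ≤ Jr μ ξ y + Jr μ ξ z := by
  rw [Jr, add_div]
  have h1 := trA_pos μ hξ hpos hy
  have h2 := trA_pos μ hξ hpos hz
  refine add_le_add ?_ ?_
  · exact div_le_div_of_nonneg_left hy.le h1 (trA_mono μ hξ (by linarith))
  · exact div_le_div_of_nonneg_left hz.le h2 (trA_mono μ hξ (by linarith))

lemma measurable_trA (μ : Measure E) [IsProbabilityMeasure μ] {ξ : E → ℝ} (hξ : Measurable ξ) :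
    Measurable (trA μ ξ) := (trA_mono μ hξ).measurable

lemma measurable_Jr (μ : Measure E) [IsProbabilityMeasure μ] {ξ : E → ℝ} (hξ : Measurable ξ) :
    Measurable (Jr μ ξ) := measurable_id.div (measurable_trA μ hξ)

/-- a general Wald-type identity -/
lemma wald (μ : Measure E) [IsProbabilityMeasure μ] {ξ : E → ℝ} (hξ : Measurable ξ)
    {y : ℝ} (hy : 0 ≤ y) (G : ℕ → Set (ℕ → E)) (hG : ∀ n, MeasurableSet (G n))
    (hdep : ∀ n x x', (∀ k < n, x k = x' k) → (x ∈ G n ↔ x' ∈ G n)) :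
    (∑' n, iidQ μ (G n)) * ENNReal.ofReal (trA μ ξ y) =
      ∫⁻ x, ∑' n, (G n).indicator (fun x => ENNReal.ofReal (min (max (ξ (x n)) 0) y)) x ∂(iidQ μ) := by
  have hgm : ∀ n : ℕ, Measurable (fun x : ℕ → E => ENNReal.ofReal (min (max (ξ (x n)) 0) y)) := by
    intro n
    have := hξ.comp (measurable_pi_apply (X := fun _ : ℕ => E) n)
    exact ((this.max measurable_const).min measurable_const).ennreal_ofReal
  rw [lintegral_tsum (fun n => ((hgm n).indicator (hG n)).aemeasurable), ← ENNReal.tsum_mul_right]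
  refine tsum_congr fun n => ?_
  have hfm : Measurable (Function.uncurry (fun (x : ℕ → E) (e : E) =>
      (G n).indicator 1 x * ENNReal.ofReal (min (max (ξ e) 0) y))) := by
    refine Measurable.mul ((measurable_one.indicator (hG n)).comp measurable_fst) ?_
    exact (((hξ.comp measurable_snd).max measurable_const).min measurable_const).ennreal_ofReal
  have h := lint_fub_coord μ n (fun x e => (G n).indicator 1 x * ENNReal.ofReal (min (max (ξ e) 0) y)) hfm
    (fun x x' e hx => by
      have := hdep n x x' hx
      by_cases h1 : x ∈ G n
      · simp [h1, this.1 h1]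
      · have h2 : x' ∉ G n := fun h2 => h1 (this.2 h2)
        simp [h1, h2])
  have e1 : ∀ x : ℕ → E, (G n).indicator (fun x => ENNReal.ofReal (min (max (ξ (x n)) 0) y)) x
      = (G n).indicator 1 x * ENNReal.ofReal (min (max (ξ (x n)) 0) y) := by
    intro x
    by_cases h1 : x ∈ G n <;> simp [h1]
  simp_rw [e1]
  rw [h]
  have e2 : ∀ e : E, ∫⁻ x, (G n).indicator 1 x * ENNReal.ofReal (min (max (ξ e) 0) y) ∂(iidQ μ)
      = iidQ μ (G n) * ENNReal.ofReal (min (max (ξ e) 0) y) := by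
    intro e
    rw [lintegral_mul_const _ (measurable_one.indicator (hG n)), lintegral_indicator_one (hG n)]
  simp_rw [e2]
  rw [lintegral_const_mul _ ((hξ.max measurable_const).min measurable_const).ennreal_ofReal,
    trA_ofReal μ hξ hy]

lemma sum_indicator_le (ξ : E → ℝ) {y : ℝ} (hy : 0 < y) (x : ℕ → E) (m : ℕ) :
    ∃ v : ℝ, (∀ k ≤ m, wk ξ k x ≤ v) ∧ (∃ k ≤ m, wk ξ k x = v) ∧
      ∑ n ∈ Finset.range m, ({x | (∀ k ≤ n, wk ξ k x ≤ wk ξ n x) ∧ wk ξ n x ≤ y} : Set (ℕ → E)).indicator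
        (fun x => ENNReal.ofReal (min (max (ξ (x n)) 0) y)) x ≤ ENNReal.ofReal (min v (2 * y)) := by
  induction m with
  | zero => exact ⟨0, by simp, ⟨0, by simp⟩, by simp⟩
  | succ m ih =>
    obtain ⟨v, h1, ⟨k0, hk0, hk0v⟩, h3⟩ := ih
    have hv0 : 0 ≤ v := by simpa using h1 0 (Nat.zero_le _)
    refine ⟨max v (wk ξ (m + 1) x), ?_, ?_, ?_⟩
    · intro k hk
      rcases Nat.lt_or_ge k (m + 1) with h | h
      · exact (h1 k (by omega)).trans (le_max_left _ _)
      · have : k = m + 1 := by omega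
        rw [this]; exact le_max_right _ _
    · rcases le_total v (wk ξ (m + 1) x) with h | h
      · exact ⟨m + 1, le_rfl, by rw [max_eq_right h]⟩
      · exact ⟨k0, by omega, by rw [max_eq_left h, hk0v]⟩
    · rw [Finset.sum_range_succ]
      by_cases hx : x ∈ ({x | (∀ k ≤ m, wk ξ k x ≤ wk ξ m x) ∧ wk ξ m x ≤ y} : Set (ℕ → E))
      · rw [Set.indicator_of_mem hx]
        refine (add_le_add_left h3 _).trans ?_
        have hv : v = wk ξ m x := le_antisymm (hk0v ▸ hx.1 k0 hk0) (h1 m le_rfl)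
        have hvy : v ≤ y := hv ▸ hx.2
        rw [← ENNReal.ofReal_add (le_min hv0 (by linarith)) (le_min (le_max_right _ _) hy.le)]
        refine ENNReal.ofReal_le_ofReal ?_
        rw [wk_succ, ← hv, min_eq_left (by linarith : v ≤ 2 * y)]
        have e : max v (v + ξ (x m)) = v + max (ξ (x m)) 0 := by
          rw [← max_add_add_left, add_zero, max_comm]
        rw [e]
        refine le_min ?_ ?_
        · linarith [min_le_left (max (ξ (x m)) 0) y]
        · linarith [min_le_right (max (ξ (x m)) 0) y]
      · rw [Set.indicator_of_notMem hx, add_zero]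
        exact h3.trans (ENNReal.ofReal_le_ofReal (min_le_min_right _ (le_max_left _ _)))

lemma green_upper (μ : Measure E) [IsProbabilityMeasure μ] {ξ : E → ℝ} (hξ : Measurable ξ)
    {y : ℝ} (hy : 0 < y) :
    (∑' n, iidQ μ {x | (∀ k ≤ n, 0 ≤ wk ξ k x) ∧ wk ξ n x ≤ y}) * ENNReal.ofReal (trA μ ξ y)
      ≤ ENNReal.ofReal (2 * y) := by
  have hm : ∀ n, MeasurableSet {x | (∀ k ≤ n, wk ξ k x ≤ wk ξ n x) ∧ wk ξ n x ≤ y} := by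
    intro n
    refine MeasurableSet.inter (s₁ := {x : ℕ → E | ∀ k ≤ n, wk ξ k x ≤ wk ξ n x}) ?_
      (measurableSet_le (measurable_wk hξ n) measurable_const)
    have : {x : ℕ → E | ∀ k ≤ n, wk ξ k x ≤ wk ξ n x} = ⋂ k, ⋂ (_ : k ≤ n), {x | wk ξ k x ≤ wk ξ n x} := by
      ext; simp
    exact this ▸ MeasurableSet.iInter fun k => MeasurableSet.iInter fun _ =>
      measurableSet_le (measurable_wk hξ k) (measurable_wk hξ n)
  have h1 : ∀ n, iidQ μ {x | (∀ k ≤ n, 0 ≤ wk ξ k x) ∧ wk ξ n x ≤ y} =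
      iidQ μ {x | (∀ k ≤ n, wk ξ k x ≤ wk ξ n x) ∧ wk ξ n x ≤ y} := by
    intro n
    rw [← (rvs_law μ n).measure_preimage (hm n).nullMeasurableSet]
    congr 1
    ext x
    have e0 : wk ξ n (rvs n x) = wk ξ n x := by rw [wk_rvs _ _ _ le_rfl]; simp
    simp only [Set.mem_preimage, Set.mem_ofPred_eq, e0]
    refine and_congr_left fun _ => ⟨fun h k hk => ?_, fun h k hk => ?_⟩
    · rw [wk_rvs _ _ _ hk]; linarith [h (n - k) (by omega)]
    · have := h (n - k) (by omega)
      rw [wk_rvs _ _ _ (by omega), Nat.sub_sub_self hk] at this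
      linarith
  simp_rw [h1]
  rw [wald μ hξ hy.le _ hm]
  · calc _ ≤ ∫⁻ _, ENNReal.ofReal (2 * y) ∂(iidQ μ) := by
          refine lintegral_mono fun x => ENNReal.tsum_le_of_sum_range_le fun m => ?_
          obtain ⟨v, -, -, h⟩ := sum_indicator_le ξ hy x m
          exact h.trans (ENNReal.ofReal_le_ofReal (min_le_right _ _))
      _ = _ := by simp
  · intro n x x' h
    have h2 : ∀ k ≤ n, wk ξ k x = wk ξ k x' := fun k hk => wk_congr ξ fun j hj => h j (by omega)
    simp only [Set.mem_ofPred_eq]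
    rw [h2 n le_rfl]
    refine and_congr_left fun _ => forall_congr' fun k => forall_congr' fun hk => by rw [h2 k hk]

lemma sum_indicator_ge (ξ : E → ℝ) (hξ0 : ∀ e, 0 ≤ ξ e) {y : ℝ} (hy : 0 < y) (x : ℕ → E) (m : ℕ) :
    ENNReal.ofReal (min (wk ξ m x) y) ≤
      ∑ n ∈ Finset.range m, ({x | wk ξ n x < y} : Set (ℕ → E)).indicator
        (fun x => ENNReal.ofReal (min (max (ξ (x n)) 0) y)) x := by
  induction m with
  | zero => simp
  | succ m ih =>
    rw [Finset.sum_range_succ]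
    have hw : 0 ≤ wk ξ m x := Finset.sum_nonneg fun k _ => hξ0 _
    refine le_trans ?_ (add_le_add_left ih _)
    by_cases hx : wk ξ m x < y
    · rw [Set.indicator_of_mem (show x ∈ {x | wk ξ m x < y} from hx),
        ← ENNReal.ofReal_add (le_min hw hy.le) (le_min (le_max_right _ _) hy.le)]
      refine ENNReal.ofReal_le_ofReal ?_
      rw [wk_succ, min_eq_left hx.le, max_eq_left (hξ0 _)]
      rcases le_total (ξ (x m)) y with h | h
      · rw [min_eq_left h]; exact min_le_left _ _
      · rw [min_eq_right h]; exact (min_le_right _ _).trans (by linarith)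
    · push Not at hx
      rw [min_eq_right hx]
      exact (ENNReal.ofReal_le_ofReal (min_le_right _ _)).trans le_self_add

lemma green_lower (μ : Measure E) [IsProbabilityMeasure μ] {ξ : E → ℝ} (hξ : Measurable ξ)
    (hξ0 : ∀ e, 0 ≤ ξ e) (hS : ∀ᵐ x ∂(iidQ μ), Tendsto (fun n => wk ξ n x) atTop atTop)
    {y : ℝ} (hy : 0 < y) :
    ENNReal.ofReal y ≤ (∑' n, iidQ μ {x | wk ξ n x < y}) * ENNReal.ofReal (trA μ ξ y) := by
  rw [wald μ hξ hy.le _ (fun n => measurableSet_lt (measurable_wk hξ n) measurable_const)]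
  · calc ENNReal.ofReal y = ∫⁻ _, ENNReal.ofReal y ∂(iidQ μ) := by simp
      _ ≤ _ := by
        refine lintegral_mono_ae ?_
        filter_upwards [hS] with x hx
        obtain ⟨m, hm⟩ := (hx.eventually_ge_atTop y).exists
        have := sum_indicator_ge ξ hξ0 hy x m
        rw [min_eq_right hm] at this
        exact this.trans (ENNReal.sum_le_tsum _)
  · intro n x x' h
    simp only [Set.mem_ofPred_eq]
    rw [wk_congr ξ h]

end IID2
end PerpAux

namespace PerpAux

section IID3
variable {E : Type*} [MeasurableSpace E]

lemma pos_of_tendsto (μ : Measure E) [IsProbabilityMeasure μ] {ξ : E → ℝ} (hξ : Measurable ξ)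
    (hS : ∀ᵐ x ∂(iidQ μ), Tendsto (fun n => wk ξ n x) atTop atTop) :
    μ {e | 0 < ξ e} ≠ 0 := by
  intro h
  have h1 : ∀ᵐ x ∂(iidQ μ), ∀ n, ¬ (0 < ξ (x n)) := by
    rw [ae_all_iff]
    intro n
    have h2 : ∀ᵐ e ∂μ, ¬ (0 < ξ e) := by rw [ae_iff]; simpa using h
    exact (coord_law μ n).quasiMeasurePreserving.ae h2
  obtain ⟨x, hx, hx2⟩ := (hS.and h1).exists
  obtain ⟨m, hm⟩ := (hx.eventually_ge_atTop 1).exists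
  have : wk ξ m x ≤ 0 := Finset.sum_nonpos fun k _ => not_lt.mp (hx2 k)
  linarith

lemma measurableSet_pos (ξ : E → ℝ) (hξ : Measurable ξ) (n : ℕ) :
    MeasurableSet {x : ℕ → E | ∀ k ≤ n, 0 ≤ wk ξ k x} := by
  have : {x : ℕ → E | ∀ k ≤ n, 0 ≤ wk ξ k x} = ⋂ k, ⋂ (_ : k ≤ n), {x | 0 ≤ wk ξ k x} := by
    ext; simp
  exact this ▸ MeasurableSet.iInter fun k => MeasurableSet.iInter fun _ =>
      measurableSet_le measurable_const (measurable_wk hξ k)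

lemma summable_of_min {u : ℕ → ℝ} (hu : ∀ n, 0 ≤ u n)
    (h : ∑' n, ENNReal.ofReal (min 1 (u n)) ≠ ⊤) : Summable u := by
  have h1 : Summable (fun n => min 1 (u n)) := by
    have := ENNReal.summable_toReal h
    refine this.congr fun n => ?_
    rw [ENNReal.toReal_ofReal (le_min zero_le_one (hu n))]
  have h2 := h1.tendsto_atTop_zero.eventually (gt_mem_nhds (zero_lt_one))
  obtain ⟨N, hN⟩ := eventually_atTop.1 h2
  rw [← summable_nat_add_iff N] at h1 ⊢
  refine h1.congr fun n => ?_
  have := hN (n + N) (by omega)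
  rcases min_lt_iff.1 this with h | h
  · exact absurd h (lt_irrefl _)
  · exact min_eq_right h.le

lemma thmA_pos (μ : Measure E) [IsProbabilityMeasure μ] {ξ : E → ℝ} (hξ : Measurable ξ)
    (hpos : μ {e | 0 < ξ e} ≠ 0)
    (lam : E → ℝ) (hlam : Measurable lam) (hlam0 : ∀ e, 0 ≤ lam e)
    (hfin : ∑' m : ℕ, ENNReal.ofReal (Real.exp (-m)) *
      ∫⁻ e, ENNReal.ofReal (Jr μ ξ (lam e + m + 1)) ∂μ < ⊤) :
    ∀ᵐ x ∂(iidQ μ), (∀ k, 0 ≤ wk ξ k x) → Summable (fun n => Real.exp (- wk ξ n x + lam (x n))) := by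
  set g : ℕ → ℕ → Set (ℕ → E) := fun n m =>
    {x | (∀ k ≤ n, 0 ≤ wk ξ k x) ∧ wk ξ n x ≤ lam (x n) + m + 1} with hg
  have hcoord : ∀ n : ℕ, Measurable (fun x : ℕ → E => lam (x n)) := fun n =>
    hlam.comp (measurable_pi_apply n)
  have hgm : ∀ n m, MeasurableSet (g n m) := fun n m =>
    (measurableSet_pos ξ hξ n).inter (measurableSet_le (measurable_wk hξ n)
      (((hcoord n).add_const _).add_const _))
  have hK : ∀ n m, iidQ μ (g n m) =
      ∫⁻ e, iidQ μ {x | (∀ k ≤ n, 0 ≤ wk ξ k x) ∧ wk ξ n x ≤ lam e + m + 1} ∂μ := by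
    intro n m
    have hms : MeasurableSet {z : (ℕ → E) × E | (∀ k ≤ n, 0 ≤ wk ξ k z.1) ∧ wk ξ n z.1 ≤ lam z.2 + m + 1} :=
      (measurable_fst (measurableSet_pos ξ hξ n)).inter
        (measurableSet_le ((measurable_wk hξ n).comp measurable_fst)
          (((hlam.comp measurable_snd).add_const _).add_const _))
    set H := {z : (ℕ → E) × E | (∀ k ≤ n, 0 ≤ wk ξ k z.1) ∧ wk ξ n z.1 ≤ lam z.2 + m + 1}
    have h := lint_fub_coord μ n (fun x e => H.indicator 1 (x, e)) (measurable_one.indicator hms)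
      (fun x x' e hx => by
        have h2 : ∀ k ≤ n, wk ξ k x = wk ξ k x' := fun k hk => wk_congr ξ fun j hj => hx j (by omega)
        have : (x, e) ∈ H ↔ (x', e) ∈ H := by
          simp only [H, Set.mem_ofPred_eq]
          rw [h2 n le_rfl]
          exact and_congr_left fun _ => forall_congr' fun k => forall_congr' fun hk => by rw [h2 k hk]
        by_cases h1 : (x, e) ∈ H
        · simp [h1, this.1 h1]
        · have h3 : (x', e) ∉ H := fun h3 => h1 (this.2 h3)
          simp [h1, h3])
    have e1 : ∀ e, ∫⁻ x, H.indicator (1 : (ℕ → E) × E → ℝ≥0∞) (x, e) ∂(iidQ μ) =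
        iidQ μ {x | (∀ k ≤ n, 0 ≤ wk ξ k x) ∧ wk ξ n x ≤ lam e + m + 1} := by
      intro e
      have hm : MeasurableSet {x | (∀ k ≤ n, 0 ≤ wk ξ k x) ∧ wk ξ n x ≤ lam e + m + 1} :=
        (measurableSet_pos ξ hξ n).inter (measurableSet_le (measurable_wk hξ n) measurable_const)
      rw [← lintegral_indicator_one hm]; rfl
    simp_rw [e1] at h
    rw [← h, ← lintegral_indicator_one (hgm n m)]; rfl
  have hbound : ∀ m : ℕ, ∑' n, iidQ μ (g n m) ≤ 2 * ∫⁻ e, ENNReal.ofReal (Jr μ ξ (lam e + m + 1)) ∂μ := by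
    intro m
    simp_rw [hK]
    rw [← lintegral_tsum, ← lintegral_const_mul']
    · refine lintegral_mono fun e => ?_
      have hy : 0 < lam e + m + 1 := by have := hlam0 e; positivity
      have h1 := green_upper μ hξ hy
      have hA := trA_pos μ hξ hpos hy
      have h2 := ENNReal.le_div_iff_mul_le (Or.inl (ENNReal.ofReal_pos.2 hA).ne')
        (Or.inl ENNReal.ofReal_ne_top) |>.2 h1
      refine h2.trans (le_of_eq ?_)
      rw [← ENNReal.ofReal_div_of_pos hA, Jr, mul_div_assoc, ENNReal.ofReal_mul (by norm_num)]
      simp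
    · simp
    · intro n
      have hms : MeasurableSet {z : E × (ℕ → E) | (∀ k ≤ n, 0 ≤ wk ξ k z.2) ∧ wk ξ n z.2 ≤ lam z.1 + m + 1} :=
        (measurable_snd (measurableSet_pos ξ hξ n)).inter
          (measurableSet_le ((measurable_wk hξ n).comp measurable_snd)
            (((hlam.comp measurable_fst).add_const _).add_const _))
      exact (measurable_measure_prodMk_left hms).aemeasurable
  have htot : ∫⁻ x, ∑' m : ℕ, ENNReal.ofReal (Real.exp (-m)) * ∑' n, (g n m).indicator 1 x ∂(iidQ μ) ≠ ⊤ := by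
    have hmm : ∀ m n, Measurable ((g n m).indicator (1 : (ℕ → E) → ℝ≥0∞)) := fun m n =>
      measurable_one.indicator (hgm n m)
    have hmt : ∀ m, Measurable (fun x => ∑' n, (g n m).indicator (1 : (ℕ → E) → ℝ≥0∞) x) := fun m =>
      Measurable.tsum (hmm m)
    rw [lintegral_tsum (fun m => ((hmt m).const_mul _).aemeasurable)]
    refine ne_top_of_le_ne_top (b := 2 * ∑' m : ℕ, ENNReal.ofReal (Real.exp (-m)) *
      ∫⁻ e, ENNReal.ofReal (Jr μ ξ (lam e + m + 1)) ∂μ) (ENNReal.mul_ne_top (by simp) hfin.ne) ?_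
    rw [← ENNReal.tsum_mul_left]
    refine ENNReal.tsum_le_tsum fun m => ?_
    rw [lintegral_const_mul _ (hmt m), lintegral_tsum (fun n => (hmm m n).aemeasurable)]
    simp_rw [lintegral_indicator_one (hgm _ m)]
    rw [← mul_assoc, mul_comm 2, mul_assoc]
    exact mul_le_mul_right (hbound m) _
  have hmeas : Measurable (fun x => ∑' m : ℕ, ENNReal.ofReal (Real.exp (-m)) *
      ∑' n, (g n m).indicator (1 : (ℕ → E) → ℝ≥0∞) x) :=
    Measurable.tsum fun m => (Measurable.tsum fun n => measurable_one.indicator (hgm n m)).const_mul _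
  filter_upwards [ae_lt_top hmeas htot] with x hx hxpos
  refine summable_of_min (fun n => (Real.exp_pos _).le) (ne_top_of_le_ne_top hx.ne ?_)
  have : ∑' m : ℕ, ENNReal.ofReal (Real.exp (-m)) * ∑' n, (g n m).indicator (1 : (ℕ → E) → ℝ≥0∞) x
      = ∑' n, ∑' m : ℕ, ENNReal.ofReal (Real.exp (-m)) * (g n m).indicator (1 : (ℕ → E) → ℝ≥0∞) x := by
    simp_rw [← ENNReal.tsum_mul_left]
    exact ENNReal.tsum_comm
  rw [this]
  refine ENNReal.tsum_le_tsum fun n => ?_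
  set m := ⌈wk ξ n x - lam (x n) - 1⌉₊ with hm
  refine le_trans ?_ (ENNReal.le_tsum m)
  have hmem : x ∈ g n m := ⟨fun k _ => hxpos k, by
    have := Nat.le_ceil (wk ξ n x - lam (x n) - 1)
    linarith⟩
  rw [Set.indicator_of_mem hmem, Pi.one_apply, mul_one]
  refine ENNReal.ofReal_le_ofReal ?_
  rcases Nat.eq_zero_or_pos m with h0 | h0
  · rw [h0]; simp
  · refine (min_le_right _ _).trans (Real.exp_le_exp.2 ?_)
    have h1 : 0 < wk ξ n x - lam (x n) - 1 := Nat.ceil_pos.1 h0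
    have := Nat.ceil_lt_add_one h1.le
    rw [← hm] at this
    linarith

lemma thmA (μ : Measure E) [IsProbabilityMeasure μ] {ξ : E → ℝ} (hξ : Measurable ξ)
    (hS : ∀ᵐ x ∂(iidQ μ), Tendsto (fun n => wk ξ n x) atTop atTop)
    (lam : E → ℝ) (hlam : Measurable lam) (hlam0 : ∀ e, 0 ≤ lam e)
    (hfin : ∑' m : ℕ, ENNReal.ofReal (Real.exp (-m)) *
      ∫⁻ e, ENNReal.ofReal (Jr μ ξ (lam e + m + 1)) ∂μ < ⊤) :
    ∀ᵐ x ∂(iidQ μ), Summable (fun n => Real.exp (- wk ξ n x + lam (x n))) := by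
  have h := thmA_pos μ hξ (pos_of_tendsto μ hξ hS) lam hlam hlam0 hfin
  have h2 := ae_all_iff.2 fun N => (shf_law μ N).quasiMeasurePreserving.ae h
  filter_upwards [hS, h2] with x hx hx2
  rw [← Nat.cofinite_eq_atTop] at hx
  obtain ⟨N, hN⟩ := hx.exists_forall_le
  have h3 := hx2 N fun k => by
    have := hN (N + k)
    rw [wk_add] at this
    linarith
  rw [← summable_nat_add_iff N]
  refine (h3.mul_left (Real.exp (- wk ξ N x))).congr fun n => ?_
  rw [← Real.exp_add, add_comm n N, wk_add]
  congr 1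
  simp only [shf]; ring

lemma thmB2 (μ : Measure E) [IsProbabilityMeasure μ] {ξ : E → ℝ} (hξ : Measurable ξ)
    (hξ0 : ∀ e, 0 ≤ ξ e)
    (hS : ∀ᵐ x ∂(iidQ μ), Tendsto (fun n => wk ξ n x) atTop atTop)
    (L : E → ℝ) (hL : Measurable L)
    (hbd : ∀ᵐ x ∂(iidQ μ), ∃ C : ℝ, ∀ n, L (x n) ≤ wk ξ n x + C) :
    ∃ b : ℝ, 0 < b ∧ ∫⁻ e, ({e | b < L e} : Set E).indicator
      (fun e => ENNReal.ofReal (Jr μ ξ (L e - b))) e ∂μ < ⊤ := by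
  have hpos := pos_of_tendsto μ hξ hS
  have hcoord : ∀ n : ℕ, Measurable (fun x : ℕ → E => L (x n)) := fun n =>
    hL.comp (measurable_pi_apply n)
  have hGm : ∀ b : ℝ, MeasurableSet {x : ℕ → E | ∀ n, L (x n) ≤ wk ξ n x + b} := by
    intro b
    have : {x : ℕ → E | ∀ n, L (x n) ≤ wk ξ n x + b} = ⋂ n, {x | L (x n) ≤ wk ξ n x + b} := by ext; simp
    exact this ▸ MeasurableSet.iInter fun n => measurableSet_le (hcoord n) ((measurable_wk hξ n).add_const _)
  have hb : ∃ k : ℕ, iidQ μ {x | ∀ n, L (x n) ≤ wk ξ n x + ((k : ℝ) + 1)} ≠ 0 := by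
    by_contra! h
    have h1 := measure_iUnion_null h
    have h2 : ∀ᵐ x ∂(iidQ μ), x ∉ ⋃ k : ℕ, {x : ℕ → E | ∀ n, L (x n) ≤ wk ξ n x + ((k : ℝ) + 1)} :=
      measure_eq_zero_iff_ae_notMem.1 h1
    obtain ⟨x, ⟨C, hC⟩, hx2⟩ := (hbd.and h2).exists
    obtain ⟨k, hk⟩ := exists_nat_ge C
    exact hx2 (Set.mem_iUnion.2 ⟨k, fun n => (hC n).trans (by linarith)⟩)
  obtain ⟨k, hk⟩ := hb
  set b : ℝ := (k : ℝ) + 1 with hbdef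
  refine ⟨b, by positivity, ?_⟩
  set G := {x : ℕ → E | ∀ n, L (x n) ≤ wk ξ n x + b} with hGdef
  set F : ℕ → Set (ℕ → E) := fun n => {x | wk ξ n x + b < L (x n)} with hF
  have hFm : ∀ n, MeasurableSet (F n) := fun n => measurableSet_lt ((measurable_wk hξ n).add_const _) (hcoord n)
  have hmono : ∀ (x : ℕ → E) n, 0 ≤ wk ξ n x := fun x n => Finset.sum_nonneg fun k _ => hξ0 _
  have hD : ∑' n, iidQ μ (F n) * iidQ μ G ≤ 1 := by
    have e : ∀ n, iidQ μ (F n) * iidQ μ G = iidQ μ (F n ∩ shf (n + 1) ⁻¹' G) := by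
      intro n
      refine (meas_indep μ (n + 1) _ _ (hFm n) (hGm b) fun x x' h => ?_).symm
      simp only [hF, Set.mem_ofPred_eq]
      rw [wk_congr ξ (fun k hk => h k (by omega)), h n (by omega)]
    simp_rw [e]
    rw [← measure_iUnion]
    · exact prob_le_one
    · have key : ∀ n n', n < n' → ∀ x, x ∈ F n ∩ shf (n + 1) ⁻¹' G → x ∈ F n' → False := by
        intro n n' hlt x hx hx'
        have h1 := hx.2 (n' - (n + 1))
        have h2 : wk ξ n' x = wk ξ (n + 1) x + wk ξ (n' - (n + 1)) (shf (n + 1) x) := by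
          rw [← wk_add]; congr 1; omega
        have h3 : shf (n + 1) x (n' - (n + 1)) = x n' := by
          simp only [shf]; congr 1; omega
        rw [h3] at h1
        have h4 : wk ξ n' x + b < L (x n') := hx'
        linarith [hmono x (n + 1)]
      intro n n' hne
      rw [Function.onFun, Set.disjoint_left]
      intro x hx hx'
      rcases lt_or_gt_of_ne hne with h | h
      · exact key n n' h x hx hx'.1
      · exact key n' n h x hx' hx.1
    · exact fun n => (hFm n).inter (measurable_shf _ (hGm b))
  have hFsum : ∑' n, iidQ μ (F n) < ⊤ := by
    rw [ENNReal.tsum_mul_right] at hD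
    by_contra h
    rw [not_lt, top_le_iff] at h
    rw [h, ENNReal.top_mul hk] at hD
    simp at hD
  refine lt_of_le_of_lt ?_ hFsum
  have hK : ∀ n, iidQ μ (F n) = ∫⁻ e, iidQ μ {x | wk ξ n x < L e - b} ∂μ := by
    intro n
    have hms : MeasurableSet {z : (ℕ → E) × E | wk ξ n z.1 + b < L z.2} :=
      measurableSet_lt (((measurable_wk hξ n).comp measurable_fst).add_const _) (hL.comp measurable_snd)
    set H := {z : (ℕ → E) × E | wk ξ n z.1 + b < L z.2}
    have h := lint_fub_coord μ n (fun x e => H.indicator 1 (x, e)) (measurable_one.indicator hms)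
      (fun x x' e hx => by
        have : (x, e) ∈ H ↔ (x', e) ∈ H := by
          simp only [H, Set.mem_ofPred_eq]
          rw [wk_congr ξ hx]
        by_cases h1 : (x, e) ∈ H
        · simp [h1, this.1 h1]
        · have h3 : (x', e) ∉ H := fun h3 => h1 (this.2 h3)
          simp [h1, h3])
    have e1 : ∀ e, ∫⁻ x, H.indicator (1 : (ℕ → E) × E → ℝ≥0∞) (x, e) ∂(iidQ μ) =
        iidQ μ {x | wk ξ n x < L e - b} := by
      intro e
      have hm : MeasurableSet {x | wk ξ n x < L e - b} :=
        (measurableSet_lt (measurable_wk hξ n) measurable_const)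
      rw [← lintegral_indicator_one hm]
      refine lintegral_congr fun x => ?_
      have : (x, e) ∈ H ↔ x ∈ {x | wk ξ n x < L e - b} := by
        simp only [H, Set.mem_ofPred_eq, lt_sub_iff_add_lt]
      by_cases h1 : (x, e) ∈ H
      · rw [Set.indicator_of_mem h1, Set.indicator_of_mem (this.1 h1)]; rfl
      · rw [Set.indicator_of_notMem h1, Set.indicator_of_notMem (fun h2 => h1 (this.2 h2))]
    simp_rw [e1] at h
    rw [← h, ← lintegral_indicator_one (hFm n)]; rfl
  simp_rw [hK]
  rw [← lintegral_tsum]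
  · refine lintegral_mono fun e => ?_
    by_cases he : e ∈ ({e | b < L e} : Set E)
    · rw [Set.indicator_of_mem he]
      have hy : 0 < L e - b := sub_pos.2 he
      have h1 := green_lower μ hξ hξ0 hS hy
      have hA := trA_pos μ hξ hpos hy
      rw [Jr, ENNReal.ofReal_div_of_pos hA]
      exact ENNReal.div_le_of_le_mul h1
    · rw [Set.indicator_of_notMem he]; exact zero_le
  · intro n
    have hms : MeasurableSet {z : E × (ℕ → E) | wk ξ n z.2 < L z.1 - b} :=
        (measurableSet_lt ((measurable_wk hξ n).comp measurable_snd)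
            ((hL.comp measurable_fst).sub_const _))
    exact (measurable_measure_prodMk_left hms).aemeasurable

end IID3
end PerpAux

namespace PerpAux

section IID4
variable {E : Type*} [MeasurableSpace E]

lemma exists_pos_level (μ : Measure E) {ξ : E → ℝ} (hpos : μ {e | 0 < ξ e} ≠ 0) :
    ∃ δ > 0, μ {e | δ < ξ e} ≠ 0 := by
  have : ∃ k : ℕ, μ {e | 1 / ((k : ℝ) + 1) < ξ e} ≠ 0 := by
    by_contra! h
    apply hpos
    refine measure_mono_null (t := ⋃ k : ℕ, {e | 1 / ((k : ℝ) + 1) < ξ e}) ?_ (measure_iUnion_null h)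
    intro e he
    obtain ⟨k, hk⟩ := exists_nat_one_div_lt (show (0:ℝ) < ξ e from he)
    exact Set.mem_iUnion.2 ⟨k, hk⟩
  obtain ⟨k, hk⟩ := this
  exact ⟨_, by positivity, hk⟩

lemma bddBelow_walk (μ : Measure E) [IsProbabilityMeasure μ] {ξ : E → ℝ} (hξ : Measurable ξ)
    {w : E → ℝ} (hw : Measurable w) (hwpos : μ {e | 0 < w e} ≠ 0)
    (hbd : ∀ᵐ x ∂(iidQ μ), ∃ C : ℝ, ∀ n, Real.exp (- wk ξ n x) * w (x n) ≤ C) :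
    ∀ᵐ x ∂(iidQ μ), ∃ C : ℝ, ∀ n, -C ≤ wk ξ n x := by
  obtain ⟨ε, hε, hr⟩ := exists_pos_level μ hwpos
  set r := μ {e | ε < w e} with hrdef
  have hcoord : ∀ n : ℕ, Measurable (fun x : ℕ → E => w (x n)) := fun n =>
    hw.comp (measurable_pi_apply n)
  set N : ℕ → Set (ℕ → E) := fun m => {x | ∃ n, wk ξ n x < -(m : ℝ)} with hN
  set V : ℕ → Set (ℕ → E) := fun m => {x | ∃ n, wk ξ n x < -(m : ℝ) ∧ ε < w (x n)} with hV
  set T : ℕ → ℕ → Set (ℕ → E) := fun m n => {x | wk ξ n x < -(m : ℝ) ∧ ∀ k < n, ¬ wk ξ k x < -(m : ℝ)} with hT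
  have hTm : ∀ m n, MeasurableSet (T m n) := by
    intro m n
    refine (measurableSet_lt (measurable_wk hξ n) measurable_const).inter
      (s₂ := {x : ℕ → E | ∀ k < n, ¬ wk ξ k x < -(m : ℝ)}) ?_
    have : {x : ℕ → E | ∀ k < n, ¬ wk ξ k x < -(m : ℝ)} = ⋂ k, ⋂ (_ : k < n), {x | wk ξ k x < -(m : ℝ)}ᶜ := by
      ext; simp
    exact this ▸ MeasurableSet.iInter fun k => MeasurableSet.iInter fun _ =>
      (measurableSet_lt (measurable_wk hξ k) measurable_const).compl
  have hH : MeasurableSet {y : ℕ → E | ε < w (y 0)} := measurableSet_lt measurable_const (hcoord 0)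
  have hQH : iidQ μ {y : ℕ → E | ε < w (y 0)} = r :=
    (coord_law μ 0).measure_preimage (measurableSet_lt measurable_const hw).nullMeasurableSet
  have hdisj : ∀ m n n' x, x ∈ T m n → x ∈ T m n' → n = n' := by
    intro m n n' x hx hx'
    by_contra hne
    rcases lt_or_gt_of_ne hne with h | h
    · exact hx'.2 n h hx.1
    · exact hx.2 n' h hx'.1
  have hVN : ∀ m, iidQ μ (N m) * r ≤ iidQ μ (V m) := by
    intro m
    have h1 : N m ⊆ ⋃ n, T m n := by
      intro x hx
      classical
      have hx' : ∃ n, wk ξ n x < -(m : ℝ) := hx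
      exact Set.mem_iUnion.2 ⟨Nat.find hx', Nat.find_spec hx', fun k hk => Nat.find_min hx' hk⟩
    calc iidQ μ (N m) * r ≤ (∑' n, iidQ μ (T m n)) * r :=
          mul_le_mul_left ((measure_mono h1).trans (measure_iUnion_le _)) _
      _ = ∑' n, iidQ μ (T m n ∩ shf n ⁻¹' {y : ℕ → E | ε < w (y 0)}) := by
          rw [← ENNReal.tsum_mul_right]
          refine tsum_congr fun n => ?_
          rw [meas_indep μ n _ _ (hTm m n) hH, hQH]
          intro x x' h
          have h2 : ∀ k ≤ n, wk ξ k x = wk ξ k x' := fun k hk => wk_congr ξ fun j hj => h j (by omega)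
          simp only [hT, Set.mem_ofPred_eq]
          rw [h2 n le_rfl]
          exact and_congr_right fun _ => forall_congr' fun k => forall_congr' fun hk => by rw [h2 k hk.le]
      _ = iidQ μ (⋃ n, T m n ∩ shf n ⁻¹' {y : ℕ → E | ε < w (y 0)}) := by
          rw [measure_iUnion]
          · intro n n' hne
            rw [Function.onFun, Set.disjoint_left]
            intro x hx hx'
            exact hne (hdisj m n n' x hx.1 hx'.1)
          · exact fun n => (hTm m n).inter (measurable_shf n hH)
      _ ≤ iidQ μ (V m) := by
          refine measure_mono (Set.iUnion_subset fun n x hx => ⟨n, hx.1.1, ?_⟩)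
          have := hx.2
          simpa [shf] using this
  have hVm : ∀ m, MeasurableSet (V m) := by
    intro m
    have : V m = ⋃ n, {x | wk ξ n x < -(m : ℝ)} ∩ {x | ε < w (x n)} := by ext; simp [hV]
    rw [this]
    exact MeasurableSet.iUnion fun n => (measurableSet_lt (measurable_wk hξ n) measurable_const).inter
      (measurableSet_lt measurable_const (hcoord n))
  have hVanti : Antitone V := by
    intro m m' h x ⟨n, h1, h2⟩
    have : (m : ℝ) ≤ m' := by exact_mod_cast h
    exact ⟨n, by linarith, h2⟩
  have hV0 : iidQ μ (⋂ m, V m) = 0 := by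
    rw [measure_eq_zero_iff_ae_notMem]
    filter_upwards [hbd] with x ⟨C, hC⟩ hx
    rw [Set.mem_iInter] at hx
    obtain ⟨m, hm⟩ := exists_nat_ge (C / ε)
    obtain ⟨n, h1, h2⟩ := hx m
    have h3 := hC n
    have h4 : (m : ℝ) + 1 ≤ Real.exp (- wk ξ n x) :=
      (Real.add_one_le_exp (m : ℝ)).trans (Real.exp_le_exp.2 (by linarith))
    rw [div_le_iff₀ hε] at hm
    nlinarith [Real.exp_pos (- wk ξ n x)]
  have hlim := tendsto_measure_iInter_atTop (μ := iidQ μ) (fun m => (hVm m).nullMeasurableSet) hVanti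
    ⟨0, measure_ne_top _ _⟩
  rw [hV0] at hlim
  have hq : iidQ μ (⋂ m, N m) * r ≤ 0 := by
    refine ge_of_tendsto' hlim fun m => le_trans ?_ (hVN m)
    exact mul_le_mul_left (measure_mono (Set.iInter_subset _ m)) _
  have hq0 : iidQ μ (⋂ m, N m) = 0 := by
    rcases mul_eq_zero.1 (le_antisymm hq zero_le) with h | h
    · exact h
    · exact absurd h hr
  rw [measure_eq_zero_iff_ae_notMem] at hq0
  filter_upwards [hq0] with x hx
  rw [Set.mem_iInter] at hx
  push Not at hx
  obtain ⟨m, hm⟩ := hx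
  refine ⟨m, fun n => ?_⟩
  by_contra h
  exact hm ⟨n, not_le.1 h⟩

lemma tendsto_on_pos (μ : Measure E) [IsProbabilityMeasure μ] {ξ : E → ℝ} (hξ : Measurable ξ)
    (hpos : μ {e | 0 < ξ e} ≠ 0) :
    ∀ᵐ x ∂(iidQ μ), (∀ k, 0 ≤ wk ξ k x) → Tendsto (fun n => wk ξ n x) atTop atTop := by
  have h : ∀ y : ℕ, ∀ᵐ x ∂(iidQ μ), ∀ᶠ n in atTop,
      x ∉ {x | (∀ k ≤ n, 0 ≤ wk ξ k x) ∧ wk ξ n x ≤ (y : ℝ) + 1} := by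
    intro y
    refine ae_eventually_notMem ?_
    have hy : (0 : ℝ) < y + 1 := by positivity
    have h1 := green_upper μ hξ hy
    have hA := trA_pos μ hξ hpos hy
    intro htop
    rw [htop, ENNReal.top_mul (ENNReal.ofReal_pos.2 hA).ne'] at h1
    exact absurd (top_le_iff.1 h1) ENNReal.ofReal_ne_top
  filter_upwards [ae_all_iff.2 h] with x hx hxpos
  rw [tendsto_atTop]
  intro b
  obtain ⟨y, hy⟩ := exists_nat_ge b
  filter_upwards [hx y] with n hn
  by_contra hlt
  exact hn ⟨fun k _ => hxpos k, by linarith⟩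

lemma tendsto_of_bddBelow_of_pos (μ : Measure E) [IsProbabilityMeasure μ] {ξ : E → ℝ} (hξ : Measurable ξ)
    (hpos : μ {e | 0 < ξ e} ≠ 0)
    (hb : ∀ᵐ x ∂(iidQ μ), ∃ C : ℝ, ∀ n, -C ≤ wk ξ n x) :
    ∀ᵐ x ∂(iidQ μ), Tendsto (fun n => wk ξ n x) atTop atTop := by
  obtain ⟨δ, hδ, hr⟩ := exists_pos_level μ hpos
  have h0 := tendsto_on_pos μ hξ hpos
  have hTm : MeasurableSet {x : ℕ → E | Tendsto (fun n => wk ξ n x) atTop atTop} :=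
    measurableSet_tendsto atTop (fun n => measurable_wk hξ n)
  have hc : ∀ c : ℕ, iidQ μ {x | (∀ k, -(c : ℝ) ≤ wk ξ k x) ∧ ¬ Tendsto (fun n => wk ξ n x) atTop atTop} = 0 := by
    intro c
    obtain ⟨j, hj⟩ := exists_nat_ge ((c : ℝ) / δ)
    rw [div_le_iff₀ hδ] at hj
    set G : Set (ℕ → E) := Set.pi ((Finset.range j : Finset ℕ) : Set ℕ) (fun _ => {e | δ < ξ e}) with hG
    have hms : MeasurableSet {e | δ < ξ e} := measurableSet_lt measurable_const hξ
    have hGm : MeasurableSet G := MeasurableSet.pi (Finset.countable_toSet _) fun _ _ => hms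
    set H : Set (ℕ → E) := {x | (∀ k, -(c : ℝ) ≤ wk ξ k x) ∧ ¬ Tendsto (fun n => wk ξ n x) atTop atTop} with hHdef
    have hHm : MeasurableSet H := by
      refine MeasurableSet.inter (s₁ := {x : ℕ → E | ∀ k, -(c : ℝ) ≤ wk ξ k x}) ?_ hTm.compl
      have : {x : ℕ → E | ∀ k, -(c : ℝ) ≤ wk ξ k x} = ⋂ k, {x | -(c : ℝ) ≤ wk ξ k x} := by ext; simp
      exact this ▸ MeasurableSet.iInter fun k => measurableSet_le measurable_const (measurable_wk hξ k)
    have hGQ : iidQ μ G ≠ 0 := by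
      rw [hG, Measure.infinitePi_pi _ (fun _ _ => hms)]
      exact Finset.prod_ne_zero_iff.2 fun _ _ => hr
    have hind := meas_indep μ j G H hGm hHm (fun x x' h => by
      simp only [hG, Set.mem_pi, Finset.mem_coe, Finset.mem_range]
      exact forall_congr' fun k => forall_congr' fun hk => by rw [h k hk])
    have hnull : iidQ μ (G ∩ shf j ⁻¹' H) = 0 := by
      rw [measure_eq_zero_iff_ae_notMem]
      filter_upwards [h0] with x hx hxm
      have hG' : ∀ k < j, δ < ξ (x k) := fun k hk => hxm.1 k (by simpa using hk)
      have h1 : ∀ k ≤ j, (k : ℝ) * δ ≤ wk ξ k x := by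
        intro k hk
        induction k with
        | zero => simp
        | succ k ih =>
          rw [wk_succ]
          have := ih (by omega)
          have := hG' k (by omega)
          push_cast; linarith
      apply hxm.2.2
      have h2 := hx fun k => by
        rcases le_total k j with hk | hk
        · exact le_trans (by positivity) (h1 k hk)
        · obtain ⟨i, rfl⟩ := Nat.exists_eq_add_of_le hk
          rw [wk_add]
          have := hxm.2.1 i
          linarith [h1 j le_rfl]
      have h3 : Tendsto (fun n => wk ξ (j + n) x) atTop atTop := by
        have := (tendsto_add_atTop_iff_nat j).2 h2
        simpa [add_comm] using this
      have h4 := tendsto_atTop_add_const_left atTop (- wk ξ j x) h3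
      refine h4.congr fun n => ?_
      rw [wk_add]; ring
    rw [hind] at hnull
    exact (mul_eq_zero.1 hnull).resolve_left hGQ
  have hc' := ae_all_iff.2 fun c => measure_eq_zero_iff_ae_notMem.1 (hc c)
  filter_upwards [hb, hc'] with x ⟨C, hC⟩ hx
  obtain ⟨c, hcC⟩ := exists_nat_ge C
  by_contra hnt
  exact hx c ⟨fun k => by linarith [hC k], hnt⟩

lemma tendsto_of_bddBelow (μ : Measure E) [IsProbabilityMeasure μ] {ξ : E → ℝ} (hξ : Measurable ξ)
    (hne : μ {e | ξ e ≠ 0} ≠ 0)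
    (hb : ∀ᵐ x ∂(iidQ μ), ∃ C : ℝ, ∀ n, -C ≤ wk ξ n x) :
    ∀ᵐ x ∂(iidQ μ), Tendsto (fun n => wk ξ n x) atTop atTop := by
  refine tendsto_of_bddBelow_of_pos μ hξ (fun h0 => ?_) hb
  have hneg : μ {e | 0 < -ξ e} ≠ 0 := by
    intro h1
    apply hne
    refine measure_mono_null (t := {e | 0 < ξ e} ∪ {e | 0 < - ξ e}) ?_ (measure_union_null h0 h1)
    intro e he
    rcases lt_or_gt_of_ne (show ξ e ≠ 0 from he) with h | h
    · right; exact neg_pos.2 h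
    · left; exact h
  have h1 := tendsto_on_pos μ hξ.neg hneg
  have h2 : ∀ᵐ x ∂(iidQ μ), ∀ n, ¬ (0 < ξ (x n)) := by
    rw [ae_all_iff]
    intro n
    have h2 : ∀ᵐ e ∂μ, ¬ (0 < ξ e) := by rw [ae_iff]; simpa using h0
    exact (coord_law μ n).quasiMeasurePreserving.ae h2
  obtain ⟨x, ⟨hx1, hx2⟩, C, hC⟩ := ((h1.and h2).and hb).exists
  have e : ∀ k, wk (-ξ) k x = - wk ξ k x := fun k => by simp [wk]
  have h3 := hx1 fun k => Finset.sum_nonneg fun i _ => by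
    have := hx2 i
    simp only [Pi.neg_apply]; linarith
  obtain ⟨n, hn⟩ := (h3.eventually_gt_atTop C).exists
  have := hC n
  rw [e] at hn
  linarith

/-- `J` including value `1` at zero. -/
def Jf (μ : Measure E) (ξ : E → ℝ) (y : ℝ) : ℝ := if y = 0 then 1 else Jr μ ξ y

lemma measurable_Jf (μ : Measure E) [IsProbabilityMeasure μ] {ξ : E → ℝ} (hξ : Measurable ξ) :
    Measurable (Jf μ ξ) :=
  Measurable.ite (measurableSet_singleton 0) measurable_const (measurable_Jr μ hξ)

lemma Jf_nonneg (μ : Measure E) {ξ : E → ℝ} {y : ℝ} (hy : 0 ≤ y) : 0 ≤ Jf μ ξ y := by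
  unfold Jf
  split_ifs
  · exact zero_le_one
  · exact Jr_nonneg μ hy

theorem iid_B (μ : Measure E) [IsProbabilityMeasure μ] {ξ : E → ℝ} (hξ : Measurable ξ)
    {w : E → ℝ} (hw : Measurable w) (hw0 : ∀ e, 0 ≤ w e) (hwpos : μ {e | 0 < w e} ≠ 0)
    (hne : μ {e | ξ e ≠ 0} ≠ 0)
    (hbd : ∀ᵐ x ∂(iidQ μ), ∃ C : ℝ, ∀ n, Real.exp (- wk ξ n x) * w (x n) ≤ C) :
    (∀ᵐ x ∂(iidQ μ), Tendsto (fun n => wk ξ n x) atTop atTop) ∧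
      Integrable (fun e => Jf μ ξ (max (Real.log (w e)) 0)) μ := by
  have hS := tendsto_of_bddBelow μ hξ hne (bddBelow_walk μ hξ hw hwpos hbd)
  refine ⟨hS, ?_⟩
  have hpos := pos_of_tendsto μ hξ hS
  set ξp : E → ℝ := fun e => max (ξ e) 0 with hξp
  have hξpm : Measurable ξp := hξ.max measurable_const
  have hle : ∀ n x, wk ξ n x ≤ wk ξp n x := fun n x => Finset.sum_le_sum fun k _ => le_max_left _ _
  have h0 : ∀ n x, 0 ≤ wk ξp n x := fun n x => Finset.sum_nonneg fun k _ => le_max_right _ _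
  have hSp : ∀ᵐ x ∂(iidQ μ), Tendsto (fun n => wk ξp n x) atTop atTop := by
    filter_upwards [hS] with x hx
    exact tendsto_atTop_mono (fun n => hle n x) hx
  set L : E → ℝ := fun e => max (Real.log (w e)) 0 with hLdef
  have hL : Measurable L := (Real.measurable_log.comp hw).max measurable_const
  have hL0 : ∀ e, 0 ≤ L e := fun e => le_max_right _ _
  obtain ⟨b, hb, hfin⟩ := thmB2 μ hξpm (fun e => le_max_right _ _) hSp L hL (by
    filter_upwards [hbd] with x ⟨C, hC⟩
    refine ⟨Real.log (max C 1), fun n => ?_⟩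
    have hC1 : 0 ≤ Real.log (max C 1) := Real.log_nonneg (le_max_right _ _)
    refine max_le ?_ (add_nonneg (h0 n x) hC1)
    rcases (hw0 (x n)).eq_or_lt with h | h
    · rw [← h, Real.log_zero]; exact add_nonneg (h0 n x) hC1
    · have h1 : w (x n) ≤ Real.exp (wk ξ n x) * max C 1 := by
        have h2 := (hC n).trans (le_max_left C 1)
        have h3 := mul_le_mul_of_nonneg_left h2 (Real.exp_pos (wk ξ n x)).le
        rwa [← mul_assoc, ← Real.exp_add, add_neg_cancel, Real.exp_zero, one_mul] at h3
      have h2 := Real.log_le_log h h1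
      rw [Real.log_mul (Real.exp_pos _).ne' (by positivity), Real.log_exp] at h2
      linarith [hle n x])
  have hJ : Jr μ ξp = Jr μ ξ := by
    ext y; simp [Jr, trA, hξp]
  rw [hJ] at hfin
  obtain ⟨C, hC, hlin⟩ := Jr_linear μ hξ hpos
  have hgint : Integrable (({e | b < L e} : Set E).indicator (fun e => Jr μ ξ (L e - b))) μ := by
    have hms : MeasurableSet {e | b < L e} := measurableSet_lt measurable_const hL
    have hmm : Measurable (({e | b < L e} : Set E).indicator (fun e => Jr μ ξ (L e - b))) :=
      ((measurable_Jr μ hξ).comp (hL.sub_const b)).indicator hms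
    refine ⟨hmm.aestronglyMeasurable, ?_⟩
    rw [hasFiniteIntegral_iff_ofReal]
    · refine lt_of_le_of_lt (le_of_eq (lintegral_congr fun e => ?_)) hfin
      by_cases he : e ∈ ({e | b < L e} : Set E)
      · rw [Set.indicator_of_mem he, Set.indicator_of_mem he]
      · rw [Set.indicator_of_notMem he, Set.indicator_of_notMem he, ENNReal.ofReal_zero]
    · refine Eventually.of_forall fun e => ?_
      refine Set.indicator_apply_nonneg fun he => Jr_nonneg μ (sub_pos.2 he).le
  refine Integrable.mono' ((integrable_const (1 + C * (1 + b) + Jr μ ξ b)).add hgint)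
    ((measurable_Jf μ hξ).comp hL).aestronglyMeasurable (Eventually.of_forall fun e => ?_)
  rw [Real.norm_of_nonneg (Jf_nonneg μ (hL0 e))]
  have hJb := Jr_nonneg μ (ξ := ξ) hb.le
  have hCb : 0 ≤ C * (1 + b) := by positivity
  simp only [Pi.add_apply]
  by_cases he : e ∈ ({e | b < L e} : Set E)
  · have he' : b < L e := he
    rw [Set.indicator_of_mem he, Jf, if_neg (by linarith)]
    have := Jr_add μ hξ hpos (sub_pos.2 he') hb
    rw [sub_add_cancel] at this
    linarith
  · have he' : L e ≤ b := not_lt.1 he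
    rw [Set.indicator_of_notMem he, Jf]
    split_ifs with h
    · linarith
    · have := hlin (L e) (lt_of_le_of_ne (hL0 e) (Ne.symm h))
      nlinarith

theorem iid_A (μ : Measure E) [IsProbabilityMeasure μ] {ξ : E → ℝ} (hξ : Measurable ξ)
    {w : E → ℝ} (hw : Measurable w) (hw0 : ∀ e, 0 ≤ w e)
    {t : E → ℝ} (ht : Measurable t) (ht0 : ∀ e, 0 ≤ t e) (hti : Integrable t μ)
    (hS : ∀ᵐ x ∂(iidQ μ), Tendsto (fun n => wk ξ n x) atTop atTop)
    (hJ : Integrable (fun e => Jf μ ξ (max (Real.log (w e)) 0)) μ) :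
    ∀ᵐ x ∂(iidQ μ), Summable (fun n => Real.exp (- wk ξ n x) * (t (x n) * w (x n))) := by
  have hpos := pos_of_tendsto μ hξ hS
  obtain ⟨C, hC, hlin⟩ := Jr_linear μ hξ hpos
  set L : E → ℝ := fun e => max (Real.log (w e)) 0 with hLdef
  have hL : Measurable L := (Real.measurable_log.comp hw).max measurable_const
  have hL0 : ∀ e, 0 ≤ L e := fun e => le_max_right _ _
  have h := thmA μ hξ hS (fun e => L e + t e) (hL.add ht) (fun e => add_nonneg (hL0 e) (ht0 e)) ?_
  · filter_upwards [h] with x hx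
    refine Summable.of_nonneg_of_le (fun n => ?_) (fun n => ?_) hx
    · exact mul_nonneg (Real.exp_pos _).le (mul_nonneg (ht0 _) (hw0 _))
    · rw [Real.exp_add, Real.exp_add, mul_comm (t (x n))]
      have h1 : w (x n) ≤ Real.exp (L (x n)) := by
        rcases (hw0 (x n)).eq_or_lt with h | h
        · rw [← h]; exact (Real.exp_pos _).le
        · calc w (x n) = Real.exp (Real.log (w (x n))) := (Real.exp_log h).symm
            _ ≤ _ := Real.exp_le_exp.2 (le_max_left _ _)
      have h2 : t (x n) ≤ Real.exp (t (x n)) := by linarith [Real.add_one_le_exp (t (x n))]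
      exact mul_le_mul_of_nonneg_left (mul_le_mul h1 h2 (ht0 _) (Real.exp_pos _).le) (Real.exp_pos _).le
  · have hb : ∀ m : ℕ, ∫⁻ e, ENNReal.ofReal (Jr μ ξ (L e + t e + m + 1)) ∂μ ≤
        ENNReal.ofReal ((∫ e, Jf μ ξ (L e) ∂μ) + C * ((∫ e, t e ∂μ) + m + 2)) := by
      intro m
      have hJ' : Integrable (fun e => Jf μ ξ (L e)) μ := hJ
      have hi2 : Integrable (fun e => C * (t e + ((m : ℝ) + 2))) μ :=
        (hti.add (integrable_const _)).const_mul C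
      have hintg : Integrable (fun e => Jf μ ξ (L e) + C * (t e + (m + 2))) μ :=
        hJ'.add hi2
      have e1 : (∫ e, Jf μ ξ (L e) ∂μ) + C * ((∫ e, t e ∂μ) + m + 2) =
          ∫ e, (Jf μ ξ (L e) + C * (t e + (m + 2))) ∂μ := by
        rw [integral_add hJ' hi2, integral_const_mul,
          integral_add hti (integrable_const _)]
        rw [integral_const, probReal_univ, one_smul]; ring
      have hnn : ∀ e, 0 ≤ Jf μ ξ (L e) + C * (t e + (m + 2)) := fun e => by
        have := Jf_nonneg μ (ξ := ξ) (hL0 e)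
        have := ht0 e
        positivity
      rw [e1, ofReal_integral_eq_lintegral_ofReal hintg (Eventually.of_forall hnn)]
      refine lintegral_mono fun e => ENNReal.ofReal_le_ofReal ?_
      have hte := ht0 e
      have h1 : 0 < t e + m + 1 := by positivity
      have h2 := hlin _ h1
      rcases (hL0 e).eq_or_lt with h | h
      · rw [← h, zero_add]
        have := Jf_nonneg μ (ξ := ξ) (le_refl (0:ℝ))
        nlinarith
      · have h3 := Jr_add μ hξ hpos h h1
        rw [Jf, if_neg h.ne']
        have e2 : L e + t e + m + 1 = L e + (t e + m + 1) := by ring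
        rw [e2]
        nlinarith
    refine lt_of_le_of_lt (ENNReal.tsum_le_tsum fun m => mul_le_mul_right (hb m) _) ?_
    simp_rw [← ENNReal.ofReal_mul (Real.exp_pos _).le]
    have hJi : 0 ≤ ∫ e, Jf μ ξ (L e) ∂μ := integral_nonneg fun e => Jf_nonneg μ (hL0 e)
    have hTi : 0 ≤ ∫ e, t e ∂μ := integral_nonneg ht0
    have hsum : Summable (fun m : ℕ => Real.exp (-(m:ℝ)) *
        ((∫ e, Jf μ ξ (L e) ∂μ) + C * ((∫ e, t e ∂μ) + m + 2))) := by
      have s1 : Summable (fun m : ℕ => Real.exp (-(m:ℝ))) := Real.summable_exp_neg_nat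
      have s2 : Summable (fun m : ℕ => (m : ℝ) * Real.exp (-(m:ℝ))) := by
        have := Real.summable_pow_mul_exp_neg_nat_mul 1 (r := 1) one_pos
        simpa using this
      refine ((s1.mul_left ((∫ e, Jf μ ξ (L e) ∂μ) + C * ((∫ e, t e ∂μ) + 2))).add (s2.mul_left C)).congr
        fun m => ?_
      ring
    rw [← ENNReal.ofReal_tsum_of_nonneg _ hsum]
    · exact ENNReal.ofReal_lt_top
    · intro m; positivity

end IID4
end PerpAux

namespace PerpAux

set_option linter.unusedSectionVars false
section Markov
variable {S : Type*} [MeasurableSpace S] [MeasurableSingletonClass S] [Countable S]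

/-- cylinder sets of the modulated chain -/
def cyl {S : Type*} (N : ℕ) (s : ℕ → S) (E : ℕ → Set (ℝ × ℝ)) : Set (ℕ → S × ℝ × ℝ) :=
  {y | (∀ k ≤ N, (y k).1 = s k) ∧ ∀ k < N, (y k).2 ∈ E k}

lemma cyl_inter (N N' : ℕ) (h : N ≤ N') (s s' : ℕ → S) (E E' : ℕ → Set (ℝ × ℝ))
    (hs : ∀ k ≤ N, s k = s' k) :
    cyl N s E ∩ cyl N' s' E' = cyl N' s' (fun k => if k < N then E k ∩ E' k else E' k) := by
  ext y
  simp only [cyl, Set.mem_inter_iff, Set.mem_ofPred_eq]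
  constructor
  · rintro ⟨⟨h1, h2⟩, h3, h4⟩
    refine ⟨h3, fun k hk => ?_⟩
    split_ifs with hkN
    · exact ⟨h2 k hkN, h4 k hk⟩
    · exact h4 k hk
  · rintro ⟨h1, h2⟩
    refine ⟨⟨fun k hk => by rw [hs k hk, h1 k (hk.trans h)], fun k hk => ?_⟩, h1, fun k hk => ?_⟩
    · have := h2 k (hk.trans_le h)
      rw [if_pos hk] at this; exact this.1
    · have := h2 k hk
      split_ifs at this
      · exact this.2
      · exact this

/-- the collection of cylinders of length at least `n` -/
def cyls (S : Type*) (n : ℕ) : Set (Set (ℕ → S × ℝ × ℝ)) :=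
  {C | ∃ N s E, n ≤ N ∧ (∀ k, MeasurableSet (E k)) ∧ C = cyl N s E}

lemma isPiSystem_cyls (n : ℕ) : IsPiSystem (cyls S n) := by
  rintro _ ⟨N, s, E, hN, hE, rfl⟩ _ ⟨N', s', E', hN', hE', rfl⟩ ⟨y, hy1, hy2⟩
  have hss : ∀ k ≤ N, k ≤ N' → s k = s' k := fun k h1 h2 => by rw [← hy1.1 k h1, hy2.1 k h2]
  rcases le_total N N' with h | h
  · refine ⟨N', s', _, hN', fun k => ?_, cyl_inter N N' h s s' E E' fun k hk => hss k hk (hk.trans h)⟩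
    split_ifs
    · exact (hE k).inter (hE' k)
    · exact hE' k
  · rw [Set.inter_comm]
    refine ⟨N, s, _, hN, fun k => ?_, cyl_inter N' N h s' s E' E fun k hk => (hss k (hk.trans h) hk).symm⟩
    split_ifs
    · exact (hE' k).inter (hE k)
    · exact hE k

lemma measurableSet_cyl (N : ℕ) (s : ℕ → S) (E : ℕ → Set (ℝ × ℝ)) (hE : ∀ k, MeasurableSet (E k)) :
    MeasurableSet (cyl N s E) := by
  have : cyl N s E = (⋂ k, ⋂ _ : k ≤ N, (fun y : ℕ → S × ℝ × ℝ => (y k).1) ⁻¹' {s k}) ∩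
      ⋂ k, ⋂ _ : k < N, (fun y : ℕ → S × ℝ × ℝ => (y k).2) ⁻¹' (E k) := by
    ext y; simp [cyl]
  rw [this]
  refine MeasurableSet.inter ?_ ?_
  · exact MeasurableSet.iInter fun k => MeasurableSet.iInter fun _ =>
      (measurable_fst.comp (measurable_pi_apply k)) (measurableSet_singleton _)
  · exact MeasurableSet.iInter fun k => MeasurableSet.iInter fun _ =>
      (measurable_snd.comp (measurable_pi_apply k)) (hE k)

lemma generate_cyls (n : ℕ) :
    (MeasurableSpace.pi : MeasurableSpace (ℕ → S × ℝ × ℝ)) = MeasurableSpace.generateFrom (cyls S n) := by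
  apply le_antisymm
  · have key : ∀ (k : ℕ) (U : Set S) (F : Set (ℝ × ℝ)), MeasurableSet F →
        MeasurableSet[MeasurableSpace.generateFrom (cyls S n)]
          {y : ℕ → S × ℝ × ℝ | (y k).1 ∈ U ∧ (y k).2 ∈ F} := by
      intro k U F hF
      set N := n + k + 1 with hN
      have : {y : ℕ → S × ℝ × ℝ | (y k).1 ∈ U ∧ (y k).2 ∈ F} =
          ⋃ (f : Fin (N + 1) → S) (_ : f ⟨k, by omega⟩ ∈ U),
            cyl N (fun l => f ⟨min l N, by omega⟩) (fun l => if l = k then F else Set.univ) := by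
        ext y
        simp only [cyl, Set.mem_ofPred_eq, Set.mem_iUnion]
        constructor
        · rintro ⟨h1, h2⟩
          refine ⟨fun l => (y l).1, h1, fun l hl => ?_, fun l hl => ?_⟩
          · simp [min_eq_left hl]
          · split_ifs with h
            · rw [h]; exact h2
            · trivial
        · rintro ⟨f, h1, h2, h3⟩
          have a := h2 k (by omega)
          have b := h3 k (by omega)
          rw [if_pos rfl] at b
          refine ⟨?_, b⟩
          rw [a]
          have e : min k N = k := by omega
          simp only [e]; exact h1
      rw [this]
      refine MeasurableSet.iUnion fun f => MeasurableSet.iUnion fun _ =>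
        MeasurableSpace.measurableSet_generateFrom ⟨N, _, _, by omega, fun l => ?_, rfl⟩
      split_ifs
      · exact hF
      · exact MeasurableSet.univ
    refine iSup_le fun k => ?_
    rw [← measurable_iff_comap_le]
    refine @Measurable.prodMk (ℕ → S × ℝ × ℝ) (MeasurableSpace.generateFrom (cyls S n)) S (ℝ × ℝ) _ _ (fun y : ℕ → S × ℝ × ℝ => (y k).1)
      (fun y => (y k).2) ?_ ?_
    · intro U _
      convert key k U Set.univ MeasurableSet.univ using 1
      ext y; simp
    · intro F hF
      convert key k Set.univ F hF using 1
      ext y; simp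
  · refine MeasurableSpace.generateFrom_le ?_
    rintro _ ⟨N, s, E, hN, hE, rfl⟩
    exact measurableSet_cyl N s E hE

/-- The properties of the path laws used. -/
structure MC (Q : S → Measure (ℕ → S × ℝ × ℝ)) : Prop where
  prob : ∀ i, IsProbabilityMeasure (Q i)
  mp : ∀ i n j (G H : Set (ℕ → S × ℝ × ℝ)), MeasurableSet G → MeasurableSet H →
    (∀ x x' : ℕ → S × ℝ × ℝ, (∀ k < n, x k = x' k) → (x ∈ G ↔ x' ∈ G)) →
    Q i (G ∩ {y | (y n).1 = j} ∩ shf n ⁻¹' H) = Q i (G ∩ {y | (y n).1 = j}) * Q j H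
  irr : ∀ i j, ∃ n, Q i {y | (y n).1 = j} ≠ 0
  recu : ∀ i, ∀ᵐ y ∂(Q i), ∃ n, 0 < n ∧ (y n).1 = i

lemma mp_of_cyl (Q : S → Measure (ℕ → S × ℝ × ℝ)) (hQ : ∀ i, IsProbabilityMeasure (Q i))
    (p : S → S → ℝ≥0∞) (K : S → S → Measure (ℝ × ℝ))
    (h1 : ∀ i N s (E : ℕ → Set (ℝ × ℝ)), (∀ k, MeasurableSet (E k)) → s 0 = i →
      Q i (cyl N s E) = ∏ k ∈ Finset.range N, (p (s k) (s (k+1)) * K (s k) (s (k+1)) (E k)))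
    (h0 : ∀ i N s (E : ℕ → Set (ℝ × ℝ)), s 0 ≠ i → Q i (cyl N s E) = 0)
    (i : S) (n : ℕ) (j : S) (G H : Set (ℕ → S × ℝ × ℝ)) (hG : MeasurableSet G) (hH : MeasurableSet H)
    (hdep : ∀ x x' : ℕ → S × ℝ × ℝ, (∀ k < n, x k = x' k) → (x ∈ G ↔ x' ∈ G)) :
    Q i (G ∩ {y | (y n).1 = j} ∩ shf n ⁻¹' H) = Q i (G ∩ {y | (y n).1 = j}) * Q j H := by
  set D : Set (ℕ → S × ℝ × ℝ) := {y | (y n).1 = j} with hD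
  have hDm : MeasurableSet D :=
    (measurable_fst.comp (measurable_pi_apply n)) (measurableSet_singleton j)
  have key : (Q i).restrict D = (((Q i).restrict D).prod (Q j)).map (glue n) := by
    have : IsFiniteMeasure ((((Q i).restrict D).prod (Q j)).map (glue n)) := by infer_instance
    refine ext_of_generate_finite _ (generate_cyls n) (isPiSystem_cyls n) ?_ ?_
    · rintro _ ⟨N, s, E, hN, hE, rfl⟩
      have hc := measurableSet_cyl N s E hE
      rw [Measure.map_apply (measurable_glue n) hc, Measure.restrict_apply hc]
      have e : glue n ⁻¹' (cyl N s E) =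
          {y | (∀ k < n, (y k).1 = s k) ∧ ∀ k < n, (y k).2 ∈ E k} ×ˢ
            cyl (N - n) (fun k => s (n + k)) (fun k => E (n + k)) := by
        ext z
        simp only [cyl, glue, Set.mem_preimage, Set.mem_prod, Set.mem_ofPred_eq]
        constructor
        · rintro ⟨a, b⟩
          refine ⟨⟨fun k hk => ?_, fun k hk => ?_⟩, fun k hk => ?_, fun k hk => ?_⟩
          · simpa [hk] using a k (by omega)
          · simpa [hk] using b k (by omega)
          · simpa using a (n + k) (by omega)
          · simpa using b (n + k) (by omega)
        · rintro ⟨⟨a, b⟩, c, d⟩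
          refine ⟨fun k hk => ?_, fun k hk => ?_⟩
          · split_ifs with h
            · exact a k h
            · have := c (k - n) (by omega)
              rwa [Nat.add_sub_cancel' (not_lt.1 h)] at this
          · split_ifs with h
            · exact b k h
            · have := d (k - n) (by omega)
              rwa [Nat.add_sub_cancel' (not_lt.1 h)] at this
      rw [e, Measure.prod_prod]
      rw [Measure.restrict_apply' hDm]
      by_cases hj : s n = j
      · have e1 : {y : ℕ → S × ℝ × ℝ | (∀ k < n, (y k).1 = s k) ∧ ∀ k < n, (y k).2 ∈ E k} ∩ D =
            cyl n s E := by
          ext y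
          simp only [hD, cyl, Set.mem_inter_iff, Set.mem_ofPred_eq]
          constructor
          · rintro ⟨⟨a, b⟩, c⟩
            refine ⟨fun k hk => ?_, b⟩
            rcases hk.lt_or_eq with h | h
            · exact a k h
            · rw [h, c, hj]
          · rintro ⟨a, b⟩
            exact ⟨⟨fun k hk => a k hk.le, b⟩, by rw [a n le_rfl, hj]⟩
        have e2 : cyl N s E ∩ D = cyl N s E := by
          rw [Set.inter_eq_left]
          intro y hy
          rw [hD, Set.mem_ofPred_eq, hy.1 n hN, hj]
        rw [e1, e2]
        by_cases hi : s 0 = i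
        · rw [h1 i N s E hE hi, h1 i n s E hE hi, h1 j (N - n) _ _ (fun k => hE _) (by simpa using hj)]
          obtain ⟨m, rfl⟩ := Nat.exists_eq_add_of_le hN
          rw [Finset.prod_range_add, Nat.add_sub_cancel_left]
          rfl
        · rw [h0 i N s E hi, h0 i n s E hi, zero_mul]
      · rw [h0 j _ _ _ (by simpa using hj), mul_zero]
        have e2 : cyl N s E ∩ D = ∅ := by
          ext y
          simp only [Set.mem_inter_iff, Set.mem_empty_iff_false, iff_false, not_and]
          intro hy hy2
          exact hj (by rw [← hy.1 n hN]; exact hy2)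
        rw [e2, measure_empty]
    · rw [Measure.map_apply (measurable_glue n) MeasurableSet.univ, Set.preimage_univ,
        Measure.restrict_apply MeasurableSet.univ, Set.univ_inter, ← Set.univ_prod_univ, Measure.prod_prod,
        measure_univ (μ := Q j), mul_one, Measure.restrict_apply MeasurableSet.univ, Set.univ_inter]
  have hGH : MeasurableSet (G ∩ shf n ⁻¹' H) := hG.inter (measurable_shf n hH)
  have e1 : G ∩ D ∩ shf n ⁻¹' H = G ∩ shf n ⁻¹' H ∩ D := by
    ext; simp only [Set.mem_inter_iff]; tauto
  rw [e1, ← Measure.restrict_apply hGH, key, Measure.map_apply (measurable_glue n) hGH]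
  have e2 : glue n ⁻¹' (G ∩ shf n ⁻¹' H) = G ×ˢ H := by
    ext z
    have a : shf n (glue n z) = z.2 := by ext k <;> simp [shf, glue]
    have b : glue n z ∈ G ↔ z.1 ∈ G := hdep _ _ fun k hk => by simp [glue, hk]
    simp only [Set.mem_preimage, Set.mem_inter_iff, a, b, Set.mem_prod]
  rw [e2, Measure.prod_prod, Measure.restrict_apply hG]

end Markov
end PerpAux

namespace PerpAux

set_option linter.unusedSectionVars false
section Cycle
variable {S : Type*} [MeasurableSpace S] [MeasurableSingletonClass S] [Countable S]

/-- running product along a path -/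
def pp {S : Type*} (n : ℕ) (y : ℕ → S × ℝ × ℝ) : ℝ := ∏ k ∈ Finset.range n, (y k).2.1
/-- general term of the perpetuity -/
def tm {S : Type*} (n : ℕ) (y : ℕ → S × ℝ × ℝ) : ℝ := pp n y * (y n).2.2
/-- return time -/
def ret {S : Type*} (i : S) (y : ℕ → S × ℝ × ℝ) : ℕ := sInf {k | 0 < k ∧ (y k).1 = i}
/-- the path after the first return -/
def RR {S : Type*} (i : S) (y : ℕ → S × ℝ × ℝ) : ℕ → S × ℝ × ℝ := shf (ret i y) y
/-- maximum of the first `n` terms -/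
def mx {S : Type*} (n : ℕ) (y : ℕ → S × ℝ × ℝ) : ℝ :=
  (((Finset.range n).sup fun k => ‖tm k y‖₊ : ℝ≥0) : ℝ)
/-- block functional at fixed length -/
def cn {S : Type*} (n : ℕ) (y : ℕ → S × ℝ × ℝ) : ℝ × ℝ × ℝ := (pp n y, mx n y, (n : ℝ))
/-- cycle functional -/
def cc {S : Type*} (i : S) (y : ℕ → S × ℝ × ℝ) : ℝ × ℝ × ℝ := cn (ret i y) y
/-- hitting event -/
def Hit {S : Type*} (i : S) : Set (ℕ → S × ℝ × ℝ) := {y | ∃ n, 0 < n ∧ (y n).1 = i}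
/-- the sequence of cycles -/
def Ph {S : Type*} (i : S) (y : ℕ → S × ℝ × ℝ) : ℕ → ℝ × ℝ × ℝ := fun n => cc i ((RR i)^[n] y)
/-- the successive return times -/
def rt {S : Type*} (i : S) (n : ℕ) (y : ℕ → S × ℝ × ℝ) : ℕ :=
  ∑ k ∈ Finset.range n, ret i ((RR i)^[k] y)

lemma measurable_pp (n : ℕ) : Measurable (pp n : (ℕ → S × ℝ × ℝ) → ℝ) := by
  unfold pp; fun_prop
lemma measurable_tm (n : ℕ) : Measurable (tm n : (ℕ → S × ℝ × ℝ) → ℝ) := by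
  have := measurable_pp (S := S) n
  unfold tm; fun_prop
lemma measurable_mx (n : ℕ) : Measurable (mx n : (ℕ → S × ℝ × ℝ) → ℝ) := by
  unfold mx
  refine measurable_coe_nnreal_real.comp ?_
  induction n with
  | zero => simp
  | succ n ih =>
    simp_rw [Finset.range_add_one, Finset.sup_insert]
    exact (measurable_tm n).nnnorm.sup ih
lemma measurable_cn (n : ℕ) : Measurable (cn n : (ℕ → S × ℝ × ℝ) → ℝ × ℝ × ℝ) :=
  (measurable_pp n).prodMk ((measurable_mx n).prodMk measurable_const)

lemma measurableSet_m (n : ℕ) (i : S) : MeasurableSet {y : ℕ → S × ℝ × ℝ | (y n).1 = i} :=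
  (measurable_fst.comp (measurable_pi_apply n)) (measurableSet_singleton i)

lemma measurableSet_Hit (i : S) : MeasurableSet (Hit i) := by
  have : Hit i = ⋃ n, ⋃ _ : 0 < n, {y : ℕ → S × ℝ × ℝ | (y n).1 = i} := by
    ext y; simp [Hit]
  rw [this]
  exact MeasurableSet.iUnion fun n => MeasurableSet.iUnion fun _ => measurableSet_m n i

/-- first return exactly at time `n` -/
def Fst {S : Type*} (i : S) (n : ℕ) : Set (ℕ → S × ℝ × ℝ) :=
  {y | 0 < n ∧ ∀ k < n, 0 < k → (y k).1 ≠ i}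

lemma measurableSet_Fst (i : S) (n : ℕ) : MeasurableSet (Fst i n) := by
  have : Fst i n = {y : ℕ → S × ℝ × ℝ | 0 < n} ∩
      ⋂ k, ⋂ _ : k < n, ⋂ _ : 0 < k, {y : ℕ → S × ℝ × ℝ | (y k).1 = i}ᶜ := by
    ext y; simp [Fst]
  rw [this]
  exact (MeasurableSet.const _).inter (MeasurableSet.iInter fun n => MeasurableSet.iInter fun _ =>
    MeasurableSet.iInter fun _ => (measurableSet_m n i).compl)

lemma ret_spec {i : S} {y : ℕ → S × ℝ × ℝ} (h : y ∈ Hit i) : 0 < ret i y ∧ (y (ret i y)).1 = i :=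
  Nat.sInf_mem (s := {k | 0 < k ∧ (y k).1 = i}) h

lemma hit_ret_iff {i : S} {n : ℕ} {y : ℕ → S × ℝ × ℝ} :
    (y ∈ Hit i ∧ ret i y = n) ↔ (y ∈ Fst i n ∧ (y n).1 = i) := by
  constructor
  · rintro ⟨h, rfl⟩
    have := ret_spec h
    exact ⟨⟨this.1, fun k hk h0 hc => Nat.notMem_of_lt_sInf hk ⟨h0, hc⟩⟩, this.2⟩
  · rintro ⟨⟨h0, h1⟩, h2⟩
    refine ⟨⟨n, h0, h2⟩, ?_⟩
    have hs := ret_spec (i := i) (y := y) ⟨n, h0, h2⟩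
    refine le_antisymm (Nat.sInf_le ⟨h0, h2⟩) ?_
    by_contra h
    exact h1 _ (not_le.1 h) hs.1 hs.2

lemma ret_of_not_hit {i : S} {y : ℕ → S × ℝ × ℝ} (h : y ∉ Hit i) : ret i y = 0 := by
  rw [ret, Nat.sInf_eq_zero]
  right
  ext k
  simp only [Set.mem_ofPred_eq, Set.mem_empty_iff_false, iff_false]
  exact fun hk => h ⟨k, hk⟩

lemma measurable_ret (i : S) : Measurable (ret i) := by
  refine measurable_to_countable' fun n => ?_
  have : ret i ⁻¹' {n} = (Fst i n ∩ {y | (y n).1 = i}) ∪ ({y | n = 0} ∩ (Hit i)ᶜ) := by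
    ext y
    by_cases h : y ∈ Hit i
    · have := hit_ret_iff (i := i) (n := n) (y := y)
      simp [h] at this ⊢
      exact this
    · have h2 := hit_ret_iff (i := i) (n := n) (y := y)
      simp only [h, false_and, false_iff] at h2
      simp only [Set.mem_preimage, Set.mem_singleton_iff, ret_of_not_hit h, Set.mem_union,
        Set.mem_inter_iff, Set.mem_ofPred_eq, h2, Set.mem_compl_iff, h, not_false_eq_true, and_true, false_or]
      exact eq_comm
  rw [this]
  exact ((measurableSet_Fst i n).inter (measurableSet_m n i)).union
    ((MeasurableSet.const _).inter (measurableSet_Hit i).compl)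

lemma measurable_at_ret {F : Type*} [MeasurableSpace F] (i : S) (f : ℕ → (ℕ → S × ℝ × ℝ) → F)
    (hf : ∀ n, Measurable (f n)) : Measurable (fun y => f (ret i y) y) := by
  have h : Measurable (fun z : ℕ × (ℕ → S × ℝ × ℝ) => f z.1 z.2) :=
    measurable_from_prod_countable_right hf
  exact h.comp ((measurable_ret i).prodMk measurable_id)

lemma measurable_RR (i : S) : Measurable (RR i) := measurable_at_ret i _ measurable_shf
lemma measurable_cc (i : S) : Measurable (cc i) := measurable_at_ret i _ measurable_cn
lemma measurable_Ph (i : S) : Measurable (Ph i) :=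
  measurable_pi_lambda _ fun n => (measurable_cc i).comp ((measurable_RR i).iterate n)

lemma pp_congr {n : ℕ} {x x' : ℕ → S × ℝ × ℝ} (h : ∀ k < n, x k = x' k) : pp n x = pp n x' :=
  Finset.prod_congr rfl fun k hk => by rw [h k (Finset.mem_range.1 hk)]
lemma tm_congr {n : ℕ} {x x' : ℕ → S × ℝ × ℝ} (h : ∀ k ≤ n, x k = x' k) : tm n x = tm n x' := by
  rw [tm, tm, pp_congr fun k hk => h k hk.le, h n le_rfl]
lemma mx_congr {n : ℕ} {x x' : ℕ → S × ℝ × ℝ} (h : ∀ k < n, x k = x' k) : mx n x = mx n x' := by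
  unfold mx
  congr 1
  refine Finset.sup_congr rfl fun k hk => ?_
  rw [tm_congr fun l hl => h l (hl.trans_lt (Finset.mem_range.1 hk))]
lemma cn_congr {n : ℕ} {x x' : ℕ → S × ℝ × ℝ} (h : ∀ k < n, x k = x' k) : cn n x = cn n x' := by
  rw [cn, cn, pp_congr h, mx_congr h]

lemma iter_eq (i : S) (n : ℕ) (y : ℕ → S × ℝ × ℝ) : (RR i)^[n] y = shf (rt i n y) y := by
  induction n with
  | zero => ext k <;> simp [rt, shf]
  | succ n ih =>
    rw [Function.iterate_succ_apply', RR, rt, Finset.sum_range_succ, ← rt]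
    generalize ret i ((RR i)^[n] y) = r
    rw [ih]
    funext k
    simp [shf, add_assoc]

lemma rt_succ (i : S) (n : ℕ) (y : ℕ → S × ℝ × ℝ) :
    rt i (n + 1) y = rt i n y + ret i ((RR i)^[n] y) := Finset.sum_range_succ _ _

lemma rt_succ' (i : S) (n : ℕ) (y : ℕ → S × ℝ × ℝ) :
    rt i (n + 1) y = ret i y + rt i n (RR i y) := by
  rw [rt, Finset.sum_range_succ', add_comm]; rfl

lemma rt_strictMono {i : S} {y : ℕ → S × ℝ × ℝ} (h : ∀ n, (RR i)^[n] y ∈ Hit i) :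
    StrictMono fun n => rt i n y := by
  refine strictMono_nat_of_lt_succ fun n => ?_
  rw [rt_succ]
  have := (ret_spec (h n)).1
  omega

lemma m_rt {i : S} {y : ℕ → S × ℝ × ℝ} (n : ℕ) (h : (RR i)^[n] y ∈ Hit i) :
    (y (rt i (n + 1) y)).1 = i := by
  have := (ret_spec h).2
  rw [iter_eq i n y] at this
  rw [rt_succ, iter_eq]
  exact this

variable {Q : S → Measure (ℕ → S × ℝ × ℝ)}

/-- strong Markov property at the first return time -/
lemma strong_markov (hQ : MC Q) (i j : S) (hit : ∀ᵐ y ∂(Q j), y ∈ Hit i) (F : Set (ℝ × ℝ × ℝ)) (hF : MeasurableSet F)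
    (H : Set (ℕ → S × ℝ × ℝ)) (hH : MeasurableSet H) :
    Q j (cc i ⁻¹' F ∩ RR i ⁻¹' H) = Q j (cc i ⁻¹' F) * Q i H := by
  have key : ∀ H : Set (ℕ → S × ℝ × ℝ), MeasurableSet H → Q j (cc i ⁻¹' F ∩ RR i ⁻¹' H) =
      ∑' n, Q j ((Fst i n ∩ cn n ⁻¹' F) ∩ {y | (y n).1 = i} ∩ shf n ⁻¹' H) := by
    intro H hH
    rw [← measure_iUnion]
    · refine measure_congr ?_
      filter_upwards [hit] with y hy
      apply propext
      change (y ∈ cc i ⁻¹' F ∩ RR i ⁻¹' H) ↔ (y ∈ ⋃ n, _)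
      rw [Set.mem_iUnion]
      simp only [Set.mem_inter_iff, Set.mem_preimage, Set.mem_ofPred_eq]
      constructor
      · rintro ⟨h1, h2⟩
        have := hit_ret_iff.1 ⟨hy, rfl⟩
        exact ⟨ret i y, ⟨⟨this.1, h1⟩, this.2⟩, h2⟩
      · rintro ⟨n, ⟨⟨h1, h2⟩, h3⟩, h4⟩
        have := (hit_ret_iff.2 ⟨h1, h3⟩).2
        rw [cc, RR, this]
        exact ⟨h2, h4⟩
    · intro n m hnm
      rw [Function.onFun, Set.disjoint_left]
      rintro y ⟨⟨⟨h1, _⟩, h3⟩, _⟩ ⟨⟨⟨h1', _⟩, h3'⟩, _⟩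
      exact hnm ((hit_ret_iff.2 ⟨h1, h3⟩).2.symm.trans (hit_ret_iff.2 ⟨h1', h3'⟩).2)
    · intro n
      exact (((measurableSet_Fst i n).inter (measurable_cn n hF)).inter (measurableSet_m n i)).inter
        (measurable_shf n hH)
  have mpn : ∀ n, Q j ((Fst i n ∩ cn n ⁻¹' F) ∩ {y | (y n).1 = i} ∩ shf n ⁻¹' H) =
      Q j ((Fst i n ∩ cn n ⁻¹' F) ∩ {y | (y n).1 = i}) * Q i H := by
    intro n
    refine hQ.mp j n i _ H ((measurableSet_Fst i n).inter (measurable_cn n hF)) hH fun x x' h => ?_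
    simp only [Set.mem_inter_iff, Set.mem_preimage, cn_congr h, Fst, Set.mem_ofPred_eq]
    have : (∀ k < n, 0 < k → (x k).1 ≠ i) ↔ (∀ k < n, 0 < k → (x' k).1 ≠ i) := by
      refine forall_congr' fun k => forall_congr' fun hk => ?_
      rw [h k hk]
    rw [this]
  rw [key H hH]
  simp_rw [mpn]
  rw [ENNReal.tsum_mul_right]
  congr 1
  have := key Set.univ MeasurableSet.univ
  simp only [Set.preimage_univ, Set.inter_univ] at this
  exact this.symm

lemma ae_RR (hQ : MC Q) (i j : S) (hit : ∀ᵐ y ∂(Q j), y ∈ Hit i) {p : (ℕ → S × ℝ × ℝ) → Prop}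
    (h : ∀ᵐ y ∂(Q i), p y) : ∀ᵐ y ∂(Q j), p (RR i y) := by
  have h2 : (Q j).map (RR i) = Q i := by
    ext H hH
    have := hQ.prob j
    have h3 := strong_markov hQ i j hit Set.univ MeasurableSet.univ H hH
    rw [Set.preimage_univ, Set.univ_inter, measure_univ, one_mul] at h3
    rw [Measure.map_apply (measurable_RR i) hH, h3]
  rw [← h2] at h
  exact ae_of_ae_map (measurable_RR i).aemeasurable h

lemma mp_RR (hQ : MC Q) (i : S) : MeasurePreserving (RR i) (Q i) (Q i) := by
  refine ⟨measurable_RR i, ?_⟩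
  ext H hH
  have := hQ.prob i
  have h3 := strong_markov hQ i i (hQ.recu i) Set.univ MeasurableSet.univ H hH
  rw [Set.preimage_univ, Set.univ_inter, measure_univ, one_mul] at h3
  rw [Measure.map_apply (measurable_RR i) hH, h3]

lemma ae_iter_hit (hQ : MC Q) (i : S) : ∀ᵐ y ∂(Q i), ∀ n, (RR i)^[n] y ∈ Hit i :=
  ae_all_iff.2 fun n => ((mp_RR hQ i).iterate n).quasiMeasurePreserving.ae (hQ.recu i)

/-- every state is hit from every state -/
lemma ae_hit (hQ : MC Q) (i j : S) : ∀ᵐ y ∂(Q j), y ∈ Hit i := by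
  obtain ⟨n, hn⟩ := hQ.irr i j
  have h1 := hQ.mp i n j Set.univ (Hit i)ᶜ MeasurableSet.univ (measurableSet_Hit i).compl (by simp)
  rw [Set.univ_inter] at h1
  have h2 : Q i ({y | (y n).1 = j} ∩ shf n ⁻¹' (Hit i)ᶜ) = 0 := by
    rw [measure_eq_zero_iff_ae_notMem]
    filter_upwards [ae_iter_hit hQ i] with y hy hc
    have hlt : n < rt i (n + 1) y := (rt_strictMono hy).id_le (n + 1)
    refine hc.2 ⟨rt i (n + 1) y - n, by omega, ?_⟩
    rw [shf, Nat.add_sub_cancel' hlt.le]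
    exact m_rt n (hy n)
  rw [h2] at h1
  exact (mul_eq_zero.1 h1.symm).resolve_left hn

/-- the law of one cycle -/
lemma Ph_law (hQ : MC Q) (i : S) [IsProbabilityMeasure ((Q i).map (cc i))] :
    (Q i).map (Ph i) = iidQ ((Q i).map (cc i)) := by
  have hp := hQ.prob i
  have key : ∀ (N : ℕ) (t : ℕ → Set (ℝ × ℝ × ℝ)), (∀ k, MeasurableSet (t k)) →
      Q i {y | ∀ k < N, Ph i y k ∈ t k} = ∏ k ∈ Finset.range N, (Q i).map (cc i) (t k) := by
    intro N
    induction N with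
    | zero => intro t ht; simp
    | succ N ih =>
      intro t ht
      have e : {y | ∀ k < N + 1, Ph i y k ∈ t k} =
          cc i ⁻¹' (t 0) ∩ RR i ⁻¹' {y | ∀ k < N, Ph i y k ∈ t (k + 1)} := by
        ext y
        simp only [Set.mem_ofPred_eq, Set.mem_inter_iff, Set.mem_preimage]
        constructor
        · intro h
          exact ⟨h 0 (by omega), fun k hk => h (k + 1) (by omega)⟩
        · rintro ⟨h1, h2⟩ k hk
          cases k with
          | zero => exact h1
          | succ k => exact h2 k (by omega)
      have hm : MeasurableSet {y | ∀ k < N, Ph i y k ∈ t (k + 1)} := by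
        have : {y | ∀ k < N, Ph i y k ∈ t (k + 1)} =
            ⋂ k, ⋂ _ : k < N, (fun y => Ph i y k) ⁻¹' (t (k + 1)) := by ext; simp
        rw [this]
        exact MeasurableSet.iInter fun k => MeasurableSet.iInter fun _ =>
          ((measurable_pi_apply k).comp (measurable_Ph i)) (ht _)
      rw [e, strong_markov hQ i i (hQ.recu i) _ (ht 0) _ hm, ih _ fun k => ht _,
        Finset.prod_range_succ', mul_comm, Measure.map_apply (measurable_cc i) (ht 0)]
  refine Measure.eq_infinitePi _ fun s t ht => ?_
  have hs : MeasurableSet (Set.pi (s : Set ℕ) t) :=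
    MeasurableSet.pi s.countable_toSet fun i _ => ht i
  rw [Measure.map_apply (measurable_Ph i) hs]
  have h1 := key (s.sup id + 1) (fun k => if k ∈ s then t k else Set.univ) (fun k => by
    split_ifs
    · exact ht k
    · exact MeasurableSet.univ)
  have hsub : s ⊆ Finset.range (s.sup id + 1) := fun k hk => by
    rw [Finset.mem_range, Nat.lt_succ_iff]; exact Finset.le_sup (f := id) hk
  have e1 : Ph i ⁻¹' (Set.pi (s : Set ℕ) t) =
      {y | ∀ k < s.sup id + 1, Ph i y k ∈ (if k ∈ s then t k else Set.univ)} := by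
    ext y
    simp only [Set.mem_preimage, Set.mem_pi, Finset.mem_coe, Set.mem_ofPred_eq]
    constructor
    · intro h k hk
      split_ifs with h'
      · exact h k h'
      · trivial
    · intro h k hk
      have := h k (Finset.mem_range.1 (hsub hk))
      rwa [if_pos hk] at this
  rw [e1, h1]
  rw [← Finset.prod_subset hsub]
  · exact Finset.prod_congr rfl fun k hk => by rw [if_pos hk]
  · intro k _ hk
    rw [if_neg hk, measure_univ]

end Cycle
end PerpAux

namespace PerpAux

set_option linter.unusedSectionVars false
section Main
variable {S : Type*} [MeasurableSpace S] [MeasurableSingletonClass S] [Countable S]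

lemma pp_add (m n : ℕ) (y : ℕ → S × ℝ × ℝ) : pp (m + n) y = pp m y * pp n (shf m y) :=
  Finset.prod_range_add _ _ _
lemma tm_add (m n : ℕ) (y : ℕ → S × ℝ × ℝ) : tm (m + n) y = pp m y * tm n (shf m y) := by
  rw [tm, tm, pp_add, mul_assoc]; rfl

/-- increment of the embedded walk -/
def xi (e : ℝ × ℝ × ℝ) : ℝ := - Real.log |e.1|
/-- maximum over the cycle -/
def ww (e : ℝ × ℝ × ℝ) : ℝ := |e.2.1|
/-- length of the cycle -/
def tt (e : ℝ × ℝ × ℝ) : ℝ := |e.2.2|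

lemma measurable_xi : Measurable xi := by unfold xi; fun_prop
lemma measurable_ww : Measurable ww := by unfold ww; fun_prop
lemma measurable_tt : Measurable tt := by unfold tt; fun_prop

lemma mx_nonneg (n : ℕ) (y : ℕ → S × ℝ × ℝ) : 0 ≤ mx n y := NNReal.coe_nonneg _
lemma le_mx {k n : ℕ} (h : k < n) (y : ℕ → S × ℝ × ℝ) : |tm k y| ≤ mx n y := by
  have := Finset.le_sup (f := fun k => ‖tm k y‖₊) (Finset.mem_range.2 h)
  have h2 : (‖tm k y‖₊ : ℝ) ≤ mx n y := NNReal.coe_le_coe.2 this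
  simpa using h2
lemma mx_attained {n : ℕ} (h : 0 < n) (y : ℕ → S × ℝ × ℝ) : ∃ k < n, mx n y = |tm k y| := by
  obtain ⟨k, hk, e⟩ := Finset.exists_mem_eq_sup (Finset.range n) ⟨0, Finset.mem_range.2 h⟩
    (fun k => ‖tm k y‖₊)
  refine ⟨k, Finset.mem_range.1 hk, ?_⟩
  rw [mx, e]; simp

lemma ww_cc (i : S) (y : ℕ → S × ℝ × ℝ) : ww (cc i y) = mx (ret i y) y := abs_of_nonneg (mx_nonneg _ _)
lemma tt_cc (i : S) (y : ℕ → S × ℝ × ℝ) : tt (cc i y) = ret i y := abs_of_nonneg (Nat.cast_nonneg _)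

lemma pp_ne_zero {y : ℕ → S × ℝ × ℝ} (h : ∀ k, (y k).2.1 ≠ 0) (n : ℕ) : pp n y ≠ 0 :=
  Finset.prod_ne_zero_iff.2 fun k _ => h k

lemma exp_wk {y : ℕ → S × ℝ × ℝ} (h : ∀ k, (y k).2.1 ≠ 0) (i : S) (n : ℕ) :
    Real.exp (- wk xi n (Ph i y)) = |pp (rt i n y) y| := by
  induction n with
  | zero => simp [rt, pp]
  | succ n ih =>
    rw [wk_succ, neg_add, Real.exp_add, ih, rt_succ, pp_add, abs_mul, ← iter_eq]
    congr 1
    have : xi (Ph i y n) = - Real.log |pp (ret i ((RR i)^[n] y)) ((RR i)^[n] y)| := rfl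
    rw [this, neg_neg, Real.exp_log]
    rw [abs_pos, iter_eq]
    exact pp_ne_zero (fun k => h _) _

/-- a block maximum is attained by a term -/
lemma block_max {y : ℕ → S × ℝ × ℝ} (h : ∀ k, (y k).2.1 ≠ 0) (i : S) (n : ℕ)
    (hit : (RR i)^[n] y ∈ Hit i) :
    ∃ k, rt i n y ≤ k ∧ Real.exp (- wk xi n (Ph i y)) * ww (Ph i y n) = |tm k y| := by
  obtain ⟨k, hk, e⟩ := mx_attained (ret_spec hit).1 ((RR i)^[n] y)
  refine ⟨rt i n y + k, by omega, ?_⟩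
  rw [exp_wk h, Ph, ww_cc, e, tm_add, abs_mul, iter_eq]

lemma block_sum {y : ℕ → S × ℝ × ℝ} (h : ∀ k, (y k).2.1 ≠ 0) (i : S) (n : ℕ) :
    ∑ k ∈ Finset.range (rt i n y), |tm k y| ≤
      ∑ k ∈ Finset.range n, Real.exp (- wk xi k (Ph i y)) * (tt (Ph i y k) * ww (Ph i y k)) := by
  induction n with
  | zero => simp [rt]
  | succ n ih =>
    rw [rt_succ, Finset.sum_range_add, Finset.sum_range_succ _ n]
    refine add_le_add ih ?_
    rw [exp_wk h, Ph, ww_cc, tt_cc]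
    calc _ ≤ ∑ _k ∈ Finset.range (ret i ((RR i)^[n] y)),
          |pp (rt i n y) y| * mx (ret i ((RR i)^[n] y)) ((RR i)^[n] y) := by
            refine Finset.sum_le_sum fun k hk => ?_
            rw [tm_add, abs_mul, ← iter_eq]
            exact mul_le_mul_of_nonneg_left (le_mx (Finset.mem_range.1 hk) _) (abs_nonneg _)
      _ = _ := by rw [Finset.sum_const, Finset.card_range, nsmul_eq_mul]; ring

lemma summable_of_blocks {y : ℕ → S × ℝ × ℝ} (h : ∀ k, (y k).2.1 ≠ 0) (i : S)
    (hit : ∀ n, (RR i)^[n] y ∈ Hit i)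
    (hs : Summable fun k => Real.exp (- wk xi k (Ph i y)) * (tt (Ph i y k) * ww (Ph i y k))) :
    Summable fun k => |tm k y| := by
  refine summable_of_sum_range_le (c := ∑' k, Real.exp (- wk xi k (Ph i y)) * (tt (Ph i y k) * ww (Ph i y k)))
    (fun _ => abs_nonneg _) fun n => ?_
  refine le_trans (Finset.sum_le_sum_of_subset_of_nonneg
    (Finset.range_mono ((rt_strictMono hit).id_le n)) fun _ _ _ => abs_nonneg _) ?_
  refine (block_sum h i n).trans (hs.sum_le_tsum _ fun k _ => ?_)
  exact mul_nonneg (Real.exp_pos _).le (mul_nonneg (abs_nonneg _) (abs_nonneg _))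

variable {Q : S → Measure (ℕ → S × ℝ × ℝ)}

/-- law of a cycle -/
abbrev lw (Q : S → Measure (ℕ → S × ℝ × ℝ)) (i : S) : Measure (ℝ × ℝ × ℝ) := (Q i).map (cc i)

lemma lw_prob (hQ : MC Q) (i : S) : IsProbabilityMeasure (lw Q i) := by
  have := hQ.prob i
  exact Measure.isProbabilityMeasure_map (measurable_cc i).aemeasurable

/-- all coefficients are nonzero almost surely -/
lemma ae_ne_zero (hQ : MC Q) (hA : ∀ j, ∀ᵐ y ∂(Q j), (y 0).2.1 ≠ 0) (i : S) :
    ∀ᵐ y ∂(Q i), ∀ k, (y k).2.1 ≠ 0 := by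
  have hm : MeasurableSet {y : ℕ → S × ℝ × ℝ | (y 0).2.1 = 0} := by
    have : Measurable fun y : ℕ → S × ℝ × ℝ => (y 0).2.1 := by fun_prop
    exact this (measurableSet_singleton 0)
  refine ae_all_iff.2 fun k => ?_
  have h : ∀ j, ∀ᵐ y ∂(Q i), ¬ (y ∈ {y : ℕ → S × ℝ × ℝ | (y k).1 = j} ∩ shf k ⁻¹' {y | (y 0).2.1 = 0}) := by
    intro j
    rw [← measure_eq_zero_iff_ae_notMem]
    have h1 := hQ.mp i k j Set.univ _ MeasurableSet.univ hm (by simp)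
    rw [Set.univ_inter] at h1
    rw [h1]
    have : Q j {y | (y 0).2.1 = 0} = 0 := by
      rw [measure_eq_zero_iff_ae_notMem]; exact hA j
    rw [this, mul_zero]
  filter_upwards [ae_all_iff.2 h] with y hy hc
  exact hy (y k).1 ⟨rfl, hc⟩

lemma ae_Ph (hQ : MC Q) (i : S) [IsProbabilityMeasure (lw Q i)] {p : (ℕ → ℝ × ℝ × ℝ) → Prop}
    (h : ∀ᵐ x ∂(iidQ (lw Q i)), p x) : ∀ᵐ y ∂(Q i), p (Ph i y) := by
  rw [← Ph_law hQ i] at h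
  exact ae_of_ae_map (measurable_Ph i).aemeasurable h

lemma ae_iid (hQ : MC Q) (i : S) [IsProbabilityMeasure (lw Q i)] {p : (ℕ → ℝ × ℝ × ℝ) → Prop}
    (hp : MeasurableSet {x | p x}) (h : ∀ᵐ y ∂(Q i), p (Ph i y)) :
    ∀ᵐ x ∂(iidQ (lw Q i)), p x := by
  rw [← Ph_law hQ i]
  exact (ae_map_iff (measurable_Ph i).aemeasurable hp).2 h

/-- `W^i` does not vanish -/
lemma ww_pos (hQ : MC Q) (hA : ∀ j, ∀ᵐ y ∂(Q j), (y 0).2.1 ≠ 0)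
    (hB : ¬ ∀ j, ∀ᵐ y ∂(Q j), (y 0).2.2 = 0) (i : S) : lw Q i {e | 0 < ww e} ≠ 0 := by
  have := lw_prob hQ i
  intro h0
  apply hB
  have hb : ∀ᵐ y ∂(Q i), ∀ k, (y k).2.2 = 0 := by
    have h1 : ∀ᵐ y ∂(Q i), ∀ n, ¬ (0 < ww (Ph i y n)) := by
      refine ae_Ph hQ i (p := fun x => ∀ n, ¬ (0 < ww (x n))) (ae_all_iff.2 fun n => ?_)
      have h2 : ∀ᵐ e ∂(lw Q i), ¬ (0 < ww e) := measure_eq_zero_iff_ae_notMem.1 h0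
      exact (coord_law (lw Q i) n).quasiMeasurePreserving.ae h2
    filter_upwards [h1, ae_ne_zero hQ hA i, ae_iter_hit hQ i] with y hy hy1 hy2 k
    have hb := block_sum hy1 i (k + 1)
    have hz : ∑ l ∈ Finset.range (k + 1), Real.exp (- wk xi l (Ph i y)) * (tt (Ph i y l) * ww (Ph i y l)) = 0 := by
      refine Finset.sum_eq_zero fun l _ => ?_
      have : ww (Ph i y l) = 0 := le_antisymm (not_lt.1 (hy l)) (abs_nonneg _)
      rw [this]; ring
    rw [hz] at hb
    have hk : k < rt i (k + 1) y := (rt_strictMono hy2).id_le (k + 1)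
    have h3 := Finset.single_le_sum (f := fun k => |tm k y|) (fun _ _ => abs_nonneg _)
      (Finset.mem_range.2 hk)
    have h4 : |tm k y| ≤ 0 := h3.trans hb
    have h5 : tm k y = 0 := abs_nonpos_iff.1 h4
    exact (mul_eq_zero.1 h5).resolve_left (pp_ne_zero hy1 k)
  intro j
  obtain ⟨n, hn⟩ := hQ.irr i j
  have hm : MeasurableSet {y : ℕ → S × ℝ × ℝ | (y 0).2.2 = 0}ᶜ := by
    have : Measurable fun y : ℕ → S × ℝ × ℝ => (y 0).2.2 := by fun_prop
    exact (this (measurableSet_singleton 0)).compl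
  have h1 := hQ.mp i n j Set.univ _ MeasurableSet.univ hm (by simp)
  rw [Set.univ_inter] at h1
  have h2 : Q i ({y | (y n).1 = j} ∩ shf n ⁻¹' {y | (y 0).2.2 = 0}ᶜ) = 0 := by
    rw [measure_eq_zero_iff_ae_notMem]
    filter_upwards [hb] with y hy hc
    exact hc.2 (hy n)
  rw [h2] at h1
  exact (mul_eq_zero.1 h1.symm).resolve_left hn

lemma tendsto_pp_iff {y : ℕ → S × ℝ × ℝ} (h : ∀ k, (y k).2.1 ≠ 0) (i : S) :
    Tendsto (fun n => pp (rt i n y) y) atTop (𝓝 0) ↔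
      Tendsto (fun n => wk xi n (Ph i y)) atTop atTop := by
  rw [tendsto_zero_iff_abs_tendsto_zero]
  have : (abs ∘ fun n => pp (rt i n y) y) = fun n => Real.exp (- wk xi n (Ph i y)) := by
    funext n; exact (exp_wk h i n).symm
  rw [this, Real.tendsto_exp_comp_nhds_zero, tendsto_neg_atBot_iff]

lemma measurable_wkxi (n : ℕ) : Measurable (wk xi n) := measurable_wk measurable_xi n

/-- property b at state `i` for the path laws -/
def Bprop (Q : S → Measure (ℕ → S × ℝ × ℝ)) (i : S) : Prop :=
  (∀ᵐ y ∂(Q i), Tendsto (fun n => pp (rt i n y) y) atTop (𝓝 0)) ∧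
    Integrable (fun e => Jf (lw Q i) xi (max (Real.log (ww e)) 0)) (lw Q i)

lemma L1 (hQ : MC Q) (hA : ∀ j, ∀ᵐ y ∂(Q j), (y 0).2.1 ≠ 0)
    (hB : ¬ ∀ j, ∀ᵐ y ∂(Q j), (y 0).2.2 = 0) (i : S)
    (hne : ¬ ∀ᵐ y ∂(Q i), |pp (ret i y) y| = 1)
    (hbd : ∀ᵐ y ∂(Q i), ∃ C : ℝ, ∀ n, |tm n y| ≤ C) : Bprop Q i := by
  have := lw_prob hQ i
  have h := iid_B (lw Q i) measurable_xi measurable_ww (fun _ => abs_nonneg _) (ww_pos hQ hA hB i) ?_ ?_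
  · refine ⟨?_, h.2⟩
    filter_upwards [ae_Ph hQ i h.1, ae_ne_zero hQ hA i] with y hy hy1
    exact (tendsto_pp_iff hy1 i).2 hy
  · intro h0
    apply hne
    have hm : MeasurableSet {e | xi e ≠ 0} := (measurable_xi (measurableSet_singleton 0)).compl
    rw [Measure.map_apply (measurable_cc i) hm, measure_eq_zero_iff_ae_notMem] at h0
    filter_upwards [h0, ae_ne_zero hQ hA i] with y hy hy1
    have h1 : xi (cc i y) = 0 := not_not.1 hy
    have h2 : Real.log |pp (ret i y) y| = 0 := neg_eq_zero.1 h1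
    have h3 : 0 < |pp (ret i y) y| := abs_pos.2 (pp_ne_zero hy1 _)
    rw [← Real.exp_log h3, h2, Real.exp_zero]
  · refine ae_iid hQ i (p := fun x => ∃ C : ℝ, ∀ n, Real.exp (- wk xi n x) * ww (x n) ≤ C) ?_ ?_
    · have : {x : ℕ → ℝ × ℝ × ℝ | ∃ C : ℝ, ∀ n, Real.exp (- wk xi n x) * ww (x n) ≤ C} =
          ⋃ C : ℕ, ⋂ n, {x | Real.exp (- wk xi n x) * ww (x n) ≤ C} := by
        ext x
        simp only [Set.mem_ofPred_eq, Set.mem_iUnion, Set.mem_iInter]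
        constructor
        · rintro ⟨C, hC⟩
          obtain ⟨N, hN⟩ := exists_nat_ge C
          exact ⟨N, fun n => (hC n).trans hN⟩
        · rintro ⟨C, hC⟩; exact ⟨C, hC⟩
      rw [this]
      refine MeasurableSet.iUnion fun C => MeasurableSet.iInter fun n => ?_
      have h1 := measurable_wkxi n
      have h2 := measurable_ww
      exact measurableSet_le (by fun_prop) measurable_const
    · filter_upwards [hbd, ae_ne_zero hQ hA i, ae_iter_hit hQ i] with y hy hy1 hy2
      obtain ⟨C, hC⟩ := hy
      refine ⟨C, fun n => ?_⟩
      obtain ⟨k, _, e⟩ := block_max hy1 i n (hy2 n)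
      rw [e]; exact hC k

/-- transfer to every initial state -/
lemma transfer_pp (hQ : MC Q) (i j : S) (h : ∀ᵐ y ∂(Q i), Tendsto (fun n => pp (rt i n y) y) atTop (𝓝 0)) :
    ∀ᵐ y ∂(Q j), Tendsto (fun n => pp (rt i n y) y) atTop (𝓝 0) := by
  filter_upwards [ae_RR hQ i j (ae_hit hQ i j) h] with y hy
  rw [← tendsto_add_atTop_iff_nat 1]
  simp_rw [rt_succ', pp_add]
  simpa [RR] using hy.const_mul (pp (ret i y) y)

lemma hS_of (hQ : MC Q) (hA : ∀ j, ∀ᵐ y ∂(Q j), (y 0).2.1 ≠ 0) (i : S) [IsProbabilityMeasure (lw Q i)]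
    (hb : ∀ᵐ y ∂(Q i), Tendsto (fun n => pp (rt i n y) y) atTop (𝓝 0)) :
    ∀ᵐ x ∂(iidQ (lw Q i)), Tendsto (fun n => wk xi n x) atTop atTop := by
  refine ae_iid hQ i (p := fun x => Tendsto (fun n => wk xi n x) atTop atTop) ?_ ?_
  · exact measurableSet_tendsto _ measurable_wkxi
  · filter_upwards [hb, ae_ne_zero hQ hA i] with y hy hy1
    exact (tendsto_pp_iff hy1 i).1 hy

lemma L2 (hQ : MC Q) (hA : ∀ j, ∀ᵐ y ∂(Q j), (y 0).2.1 ≠ 0) (i : S)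
    (hr : Integrable (fun y => (ret i y : ℝ)) (Q i)) (hb : Bprop Q i) (j : S) :
    ∀ᵐ y ∂(Q j), Summable fun n => |tm n y| := by
  have := lw_prob hQ i
  have hti : Integrable tt (lw Q i) := by
    refine (integrable_map_measure measurable_tt.aestronglyMeasurable (measurable_cc i).aemeasurable).2 ?_
    refine hr.congr (Eventually.of_forall fun y => ?_)
    exact (tt_cc i y).symm
  have hS := hS_of hQ hA i hb.1
  have h := iid_A (lw Q i) measurable_xi measurable_ww (fun _ => abs_nonneg _) measurable_tt
    (fun _ => abs_nonneg _) hti hS hb.2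
  have h2 : ∀ᵐ y ∂(Q i), Summable fun n => |tm n y| := by
    filter_upwards [ae_Ph hQ i h, ae_ne_zero hQ hA i, ae_iter_hit hQ i] with y hy hy1 hy2
    exact summable_of_blocks hy1 i hy2 hy
  filter_upwards [ae_RR hQ i j (ae_hit hQ i j) h2] with y hy
  rw [← summable_nat_add_iff (ret i y)]
  simp_rw [add_comm _ (ret i y), tm_add, abs_mul]
  exact hy.mul_left _

lemma L3 (hQ : MC Q) (hA : ∀ j, ∀ᵐ y ∂(Q j), (y 0).2.1 ≠ 0)
    (hB : ¬ ∀ j, ∀ᵐ y ∂(Q j), (y 0).2.2 = 0) (i : S)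
    (hd : ∀ᵐ y ∂(Q i), Tendsto (fun n => tm n y) atTop (𝓝 0)) :
    ¬ ∀ᵐ y ∂(Q i), |pp (ret i y) y| = 1 := by
  have := lw_prob hQ i
  intro h1
  have h2 : ∀ᵐ e ∂(lw Q i), xi e = 0 := by
    refine (ae_map_iff (measurable_cc i).aemeasurable (measurable_xi (measurableSet_singleton 0))).2 ?_
    filter_upwards [h1] with y hy
    have : xi (cc i y) = - Real.log |pp (ret i y) y| := rfl
    rw [this, hy]; simp
  have h3 : ∀ᵐ x ∂(iidQ (lw Q i)), ∀ n, xi (x n) = 0 :=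
    ae_all_iff.2 fun n => (coord_law (lw Q i) n).quasiMeasurePreserving.ae h2
  have h4 : ∀ᵐ x ∂(iidQ (lw Q i)), Tendsto (fun n => ww (x n)) atTop (𝓝 0) := by
    refine ae_iid hQ i (p := fun x => Tendsto (fun n => ww (x n)) atTop (𝓝 0)) ?_ ?_
    · exact measurableSet_tendsto _ fun n => measurable_ww.comp (measurable_pi_apply n)
    · filter_upwards [hd, ae_Ph hQ i h3, ae_ne_zero hQ hA i, ae_iter_hit hQ i] with y hy hy0 hy1 hy2
      choose k hk hk2 using fun n => block_max hy1 i n (hy2 n)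
      have hw : ∀ n, ww (Ph i y n) = |tm (k n) y| := by
        intro n
        rw [← hk2 n, wk, Finset.sum_eq_zero fun l _ => hy0 l]; simp
      simp_rw [hw]
      have hkt : Tendsto k atTop atTop :=
        tendsto_atTop_mono (fun n => ((rt_strictMono hy2).id_le n).trans (hk n)) tendsto_id
      simpa using (hy.comp hkt).abs
  have h5 := tendstoInMeasure_of_tendsto_ae (μ := iidQ (lw Q i)) (f := fun n x => ww (x n)) (g := fun _ => 0)
    (fun n => (measurable_ww.comp (measurable_pi_apply n)).aestronglyMeasurable) h4
  apply ww_pos hQ hA hB i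
  have h6 : ∀ m : ℕ, lw Q i {e | 1 / ((m : ℝ) + 1) ≤ ww e} = 0 := by
    intro m
    have hε : (0 : ℝ) < 1 / (m + 1) := by positivity
    have h7 := (tendstoInMeasure_iff_norm.1 h5) _ hε
    have hms : MeasurableSet {e : ℝ × ℝ × ℝ | 1 / ((m : ℝ) + 1) ≤ ww e} :=
      measurableSet_le measurable_const measurable_ww
    have h8 : ∀ n, iidQ (lw Q i) {x | 1 / ((m : ℝ) + 1) ≤ ‖ww (x n) - 0‖} =
        lw Q i {e | 1 / ((m : ℝ) + 1) ≤ ww e} := by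
      intro n
      rw [← (coord_law (lw Q i) n).measure_preimage hms.nullMeasurableSet]
      congr 1
      ext x
      simp [ww]
    simp_rw [h8] at h7
    exact tendsto_nhds_unique tendsto_const_nhds h7
  have h9 : {e : ℝ × ℝ × ℝ | 0 < ww e} ⊆ ⋃ m : ℕ, {e | 1 / ((m : ℝ) + 1) ≤ ww e} := by
    intro e he
    obtain ⟨m, hm⟩ := exists_nat_one_div_lt (show 0 < ww e from he)
    exact Set.mem_iUnion.2 ⟨m, hm.le⟩
  exact measure_mono_null h9 (measure_iUnion_null h6)

end Main
end PerpAux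

namespace PerpAux
open Perpetuities Perpetuities.MMSetting

section Setting
variable {S : Type*} [MeasurableSpace S] [MeasurableSingletonClass S] [Countable S]
variable {Ω : Type*} [MeasurableSpace Ω] (X : MMSetting S Ω)

/-- path map -/
def Yp (ω : Ω) : ℕ → S × ℝ × ℝ := fun n => (X.M n ω, X.A n ω, X.B n ω)

lemma measurable_Yp : Measurable (Yp X) :=
  measurable_pi_lambda _ fun n => (X.measM n).prodMk ((X.measA n).prodMk (X.measB n))

/-- path laws -/
def Qp (i : S) : Measure (ℕ → S × ℝ × ℝ) := (X.P i).map (Yp X)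

lemma ae_Qp {i : S} {p : (ℕ → S × ℝ × ℝ) → Prop} (h : ∀ᵐ y ∂(Qp X i), p y) :
    ∀ᵐ ω ∂(X.P i), p (Yp X ω) := ae_of_ae_map (measurable_Yp X).aemeasurable h

lemma ae_Qp' {i : S} {p : (ℕ → S × ℝ × ℝ) → Prop} (hp : MeasurableSet {y | p y})
    (h : ∀ᵐ ω ∂(X.P i), p (Yp X ω)) : ∀ᵐ y ∂(Qp X i), p y :=
  (ae_map_iff (measurable_Yp X).aemeasurable hp).2 h

lemma ae_of_one {α : Type*} [MeasurableSpace α] {μ : Measure α} [IsProbabilityMeasure μ] {s : Set α}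
    (hs : MeasurableSet s) : μ s < 1 ↔ ¬ ∀ᵐ x ∂μ, x ∈ s := by
  rw [prob_le_one.lt_iff_ne, not_iff_not]
  exact (mem_ae_iff_prob_eq_one hs).symm

lemma mc_Qp : MC (Qp X) := by
  have hP := X.prob
  have hpr : ∀ i, IsProbabilityMeasure (Qp X i) := fun i =>
    Measure.isProbabilityMeasure_map (measurable_Yp X).aemeasurable
  have hcyl : ∀ N (s : ℕ → S) (E : ℕ → Set (ℝ × ℝ)), Yp X ⁻¹' (cyl N s E) =
      (⋂ k ∈ Finset.range (N + 1), {ω | X.M k ω = s k}) ∩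
        ⋂ k ∈ Finset.range N, {ω | (X.A k ω, X.B k ω) ∈ E k} := by
    intro N s E
    ext ω
    simp only [cyl, Yp, Set.mem_preimage, Set.mem_ofPred_eq, Set.mem_inter_iff, Set.mem_iInter,
      Finset.mem_range, Nat.lt_succ_iff]
  have hm0 : ∀ i, MeasurableSet {ω | X.M 0 ω = i} := fun i => X.measM 0 (measurableSet_singleton i)
  refine ⟨hpr, ?_, ?_, ?_⟩
  · refine mp_of_cyl (Qp X) hpr X.p X.K ?_ ?_
    · intro i N s E hE hs
      rw [Qp, Measure.map_apply (measurable_Yp X) (measurableSet_cyl N s E hE), hcyl,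
        X.modulated i N s E hs hE, X.chain i N s hs, Finset.prod_mul_distrib]
    · intro i N s E hs
      have h1 : ∀ᵐ ω ∂(X.P i), X.M 0 ω = i := (mem_ae_iff_prob_eq_one (hm0 i)).2 (X.start i)
      have h2 : ∀ᵐ y ∂(Qp X i), (y 0).1 = i := ae_Qp' X (measurableSet_m 0 i) h1
      rw [measure_eq_zero_iff_ae_notMem]
      filter_upwards [h2] with y hy hc
      exact hs (by rw [← hc.1 0 (Nat.zero_le _), hy])
  · intro i j
    obtain ⟨n, hn⟩ := X.irreducible i j
    refine ⟨n, ?_⟩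
    rw [Qp, Measure.map_apply (measurable_Yp X) (measurableSet_m n j)]
    exact hn.ne'
  · intro i
    refine ae_Qp' X (measurableSet_Hit i) ?_
    have hm : MeasurableSet {ω | ∃ n, 0 < n ∧ X.M n ω = i} := measurable_Yp X (measurableSet_Hit i)
    exact (mem_ae_iff_prob_eq_one hm).2 (X.recurrent i)

lemma ret_Yp (i : S) (ω : Ω) : ret i (Yp X ω) = X.tau i 1 ω := rfl
lemma pp_Yp (n : ℕ) (ω : Ω) : pp n (Yp X ω) = X.Pprod n ω := rfl
lemma tm_Yp (n : ℕ) (ω : Ω) : tm n (Yp X ω) = X.Pprod n ω * X.B n ω := rfl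
lemma Ai_eq (i : S) (ω : Ω) : X.Ai i ω = (cc i (Yp X ω)).1 := rfl
lemma Wi_eq (i : S) (ω : Ω) : X.Wi i ω = ww (cc i (Yp X ω)) := by
  rw [ww_cc]; rfl
lemma Stau_eq (i : S) (ω : Ω) : X.Stau i ω = xi (cc i (Yp X ω)) := rfl

lemma measurable_ccY (i : S) : Measurable fun ω => cc i (Yp X ω) :=
  (measurable_cc i).comp (measurable_Yp X)

lemma lw_Qp (i : S) : lw (Qp X) i = (X.P i).map fun ω => cc i (Yp X ω) :=
  Measure.map_map (measurable_cc i) (measurable_Yp X)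

lemma tau_eq (i : S) (ω : Ω) (h : ∀ n, (RR i)^[n] (Yp X ω) ∈ Hit i) (n : ℕ) :
    X.tau i n ω = rt i n (Yp X ω) := by
  induction n with
  | zero => rfl
  | succ n ih =>
    have h1 : X.tau i (n + 1) ω = sInf {k | X.tau i n ω < k ∧ X.M k ω = i} := rfl
    rw [h1, ih, rt_succ]
    have hn := h n
    have hs := ret_spec hn
    have hmin : ∀ l, 0 < l → (((RR i)^[n] (Yp X ω)) l).1 = i → ret i ((RR i)^[n] (Yp X ω)) ≤ l :=
      fun l h0 hl => Nat.sInf_le ⟨h0, hl⟩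
    generalize ret i ((RR i)^[n] (Yp X ω)) = r at hs hmin
    rw [iter_eq] at hs hmin
    apply le_antisymm
    · exact Nat.sInf_le ⟨by omega, hs.2⟩
    · refine le_csInf ⟨rt i n (Yp X ω) + r, by omega, hs.2⟩ ?_
      rintro k ⟨hk1, hk2⟩
      have := hmin (k - rt i n (Yp X ω)) (by omega) (by
        rw [shf, Nat.add_sub_cancel' hk1.le]; exact hk2)
      omega

lemma ae_iter_hit' (i j : S) : ∀ᵐ ω ∂(X.P j), ∀ n, (RR i)^[n] (Yp X ω) ∈ Hit i := by
  have hQ := mc_Qp X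
  have h1 := ae_hit hQ i j
  have h2 := ae_RR hQ i j h1 (ae_iter_hit hQ i)
  refine ae_Qp X (p := fun y => ∀ n, (RR i)^[n] y ∈ Hit i) ?_
  filter_upwards [h1, h2] with y hy1 hy2 n
  cases n with
  | zero => exact hy1
  | succ n => exact hy2 n

lemma ae_Ppi {p : Ω → Prop} : (∀ᵐ ω ∂X.Pπ, p ω) ↔ ∀ j, ∀ᵐ ω ∂(X.P j), p ω := by
  rw [MMSetting.Pπ, Measure.ae_sum_iff]
  refine forall_congr' fun j => ?_
  rw [Measure.ae_ennreal_smul_measure_iff (X.πpos j).ne']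

lemma Ppi_prob : IsProbabilityMeasure X.Pπ := by
  have hP := X.prob
  refine ⟨?_⟩
  rw [MMSetting.Pπ, Measure.sum_apply _ MeasurableSet.univ]
  simp [X.πsum]

lemma nonempty_S (X : MMSetting S Ω) : Nonempty S := by
  by_contra h
  rw [not_nonempty_iff] at h
  have := X.πsum
  simp at this

lemma ret_int (i : S) : Integrable (fun y => (ret i y : ℝ)) (Qp X i) := by
  have hm : Measurable (fun y : ℕ → S × ℝ × ℝ => (ret i y : ℝ)) :=
    measurable_from_nat.comp (measurable_ret i)
  refine (integrable_map_measure hm.aestronglyMeasurable (measurable_Yp X).aemeasurable).2 ?_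
  refine ⟨(hm.comp (measurable_Yp X)).aestronglyMeasurable, ?_⟩
  rw [hasFiniteIntegral_iff_enorm]
  refine lt_of_le_of_lt (le_of_eq ?_) (X.posRecurrent i)
  refine lintegral_congr fun ω => ?_
  rw [Function.comp_apply, Real.enorm_natCast]
  rfl

lemma hA' (hA : X.Pπ {ω | X.A 0 ω = 0} = 0) (j : S) : ∀ᵐ y ∂(Qp X j), (y 0).2.1 ≠ 0 := by
  rw [measure_eq_zero_iff_ae_notMem, ae_Ppi] at hA
  refine ae_Qp' X ?_ (hA j)
  have : Measurable fun y : ℕ → S × ℝ × ℝ => (y 0).2.1 := by fun_prop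
  exact (this (measurableSet_singleton 0)).compl

lemma hB' (hB : X.Pπ {ω | X.B 0 ω = 0} < 1) : ¬ ∀ j, ∀ᵐ y ∂(Qp X j), (y 0).2.2 = 0 := by
  have := Ppi_prob X
  intro h
  refine (ae_of_one ((X.measB 0) (measurableSet_singleton 0))).1 hB ?_
  rw [ae_Ppi]
  exact fun j => ae_Qp X (h j)

/-- the statement b at `i` in the original setting -/
def Borig (i : S) : Prop :=
  (∀ᵐ ω ∂ X.Pπ, Tendsto (fun n => X.Pprod (X.tau i n ω) ω) atTop (nhds 0)) ∧
        Integrable (fun ω => X.Ji i (logplus (X.Wi i ω))) (X.P i)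

lemma tendsto_tau_iff (i : S) :
    (∀ᵐ ω ∂ X.Pπ, Tendsto (fun n => X.Pprod (X.tau i n ω) ω) atTop (nhds 0)) ↔
      ∀ᵐ y ∂(Qp X i), Tendsto (fun n => pp (rt i n y) y) atTop (𝓝 0) := by
  have hm : MeasurableSet {y : ℕ → S × ℝ × ℝ | Tendsto (fun n => pp (rt i n y) y) atTop (𝓝 0)} := by
    refine measurableSet_tendsto _ fun n => ?_
    have h : Measurable (fun z : ℕ × (ℕ → S × ℝ × ℝ) => pp z.1 z.2) :=
      measurable_from_prod_countable_right measurable_pp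
    have h2 : Measurable (rt i n : (ℕ → S × ℝ × ℝ) → ℕ) :=
      Finset.measurable_sum _ fun k _ => (measurable_ret i).comp ((measurable_RR i).iterate k)
    exact h.comp (h2.prodMk measurable_id)
  rw [ae_Ppi]
  constructor
  · intro h
    refine ae_Qp' X hm ?_
    filter_upwards [h i, ae_iter_hit' X i i] with ω h1 h2
    simp_rw [tau_eq X i ω h2] at h1
    exact h1
  · intro h j
    filter_upwards [ae_Qp X (transfer_pp (mc_Qp X) i j h), ae_iter_hit' X i j] with ω h1 h2
    simp_rw [tau_eq X i ω h2]
    exact h1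

lemma Borig_iff (hA : X.Pπ {ω | X.A 0 ω = 0} = 0) (i : S) : Borig X i ↔ Bprop (Qp X) i := by
  have hQ := mc_Qp X
  have hpr := lw_prob hQ i
  have hP := X.prob i
  rw [Borig, Bprop, tendsto_tau_iff]
  refine and_congr_right fun h => ?_
  have hpos := pos_of_tendsto (lw (Qp X) i) measurable_xi (hS_of hQ (hA' X hA) i h)
  have hlt : X.P i {ω | X.Stau i ω ≤ 0} < 1 := by
    have hm : MeasurableSet {ω | X.Stau i ω ≤ 0} :=
      measurableSet_le (measurable_xi.comp (measurable_ccY X i)) measurable_const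
    rw [ae_of_one hm]
    intro hc
    apply hpos
    have hm2 : MeasurableSet {e | 0 < xi e} := measurableSet_lt measurable_const measurable_xi
    rw [lw_Qp, Measure.map_apply (measurable_ccY X i) hm2, measure_eq_zero_iff_ae_notMem]
    filter_upwards [hc] with ω hω h2
    exact absurd h2 (not_lt.2 hω)
  have hJ : ∀ x, X.Ji i x = Jf (lw (Qp X) i) xi x := by
    intro x
    rw [MMSetting.Ji, Jf, if_pos hlt, Jr, trA, lw_Qp, integral_map (measurable_ccY X i).aemeasurable]
    · rfl
    · exact ((measurable_xi.max measurable_const).min measurable_const).aestronglyMeasurable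
  have hJm : Measurable (fun e => Jf (lw (Qp X) i) xi (max (Real.log (ww e)) 0)) :=
    (measurable_Jf _ measurable_xi).comp ((Real.measurable_log.comp measurable_ww).max measurable_const)
  have e1 : (fun ω => X.Ji i (logplus (X.Wi i ω))) =
      (fun e => Jf (lw (Qp X) i) xi (max (Real.log (ww e)) 0)) ∘ (fun ω => cc i (Yp X ω)) := by
    funext ω
    rw [hJ, Wi_eq]; rfl
  rw [e1]
  have := integrable_map_measure (μ := X.P i) (f := fun ω => cc i (Yp X ω))
    hJm.aestronglyMeasurable (measurable_ccY X i).aemeasurable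
  rw [← this, ← lw_Qp]

lemma c_to_b (hA : X.Pπ {ω | X.A 0 ω = 0} = 0) (hB : X.Pπ {ω | X.B 0 ω = 0} < 1) (i : S)
    (h1 : X.P i {ω | |X.Ai i ω| = 1} < 1)
    (h2 : ∀ᵐ ω ∂ X.Pπ, ∃ C : ℝ, ∀ n, |X.Pprod n ω * X.B n ω| ≤ C) : Borig X i := by
  have hP := X.prob i
  have hmA : Measurable (X.Ai i) := measurable_fst.comp (measurable_ccY X i)
  rw [Borig_iff X hA]
  refine L1 (mc_Qp X) (hA' X hA) (hB' X hB) i ?_ ?_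
  · intro h
    have hm : MeasurableSet {ω | |X.Ai i ω| = 1} := hmA.abs (measurableSet_singleton 1)
    exact (ae_of_one hm).1 h1 (ae_Qp X h)
  · refine ae_Qp' X ?_ (ae_Ppi X |>.1 h2 i)
    have : {y : ℕ → S × ℝ × ℝ | ∃ C : ℝ, ∀ n, |tm n y| ≤ C} =
        ⋃ C : ℕ, ⋂ n, {y | |tm n y| ≤ C} := by
      ext x
      simp only [Set.mem_ofPred_eq, Set.mem_iUnion, Set.mem_iInter]
      constructor
      · rintro ⟨C, hC⟩
        obtain ⟨N, hN⟩ := exists_nat_ge C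
        exact ⟨N, fun n => (hC n).trans hN⟩
      · rintro ⟨C, hC⟩; exact ⟨C, hC⟩
    rw [this]
    exact MeasurableSet.iUnion fun C => MeasurableSet.iInter fun n =>
      measurableSet_le (measurable_tm n).abs measurable_const

lemma b_to_e (hA : X.Pπ {ω | X.A 0 ω = 0} = 0) (i : S) (h : Borig X i) :
    ∀ᵐ ω ∂ X.Pπ, Summable fun n => |X.Pprod n ω * X.B n ω| := by
  rw [Borig_iff X hA] at h
  rw [ae_Ppi]
  intro j
  exact ae_Qp X (L2 (mc_Qp X) (hA' X hA) i (ret_int X i) h j)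

lemma d_to_c (hA : X.Pπ {ω | X.A 0 ω = 0} = 0) (hB : X.Pπ {ω | X.B 0 ω = 0} < 1)
    (h : ∀ᵐ ω ∂ X.Pπ, Tendsto (fun n => X.Pprod n ω * X.B n ω) atTop (nhds 0)) (i : S) :
    X.P i {ω | |X.Ai i ω| = 1} < 1 := by
  have hP := X.prob i
  have hmA : Measurable (X.Ai i) := measurable_fst.comp (measurable_ccY X i)
  have hm : MeasurableSet {ω | |X.Ai i ω| = 1} := hmA.abs (measurableSet_singleton 1)
  rw [ae_of_one hm]
  intro hc
  refine L3 (mc_Qp X) (hA' X hA) (hB' X hB) i ?_ ?_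
  · exact ae_Qp' X (measurableSet_tendsto _ measurable_tm) (ae_Ppi X |>.1 h i)
  · refine ae_Qp' X ?_ hc
    have : Measurable fun y : ℕ → S × ℝ × ℝ => (cc i y).1 := measurable_fst.comp (measurable_cc i)
    exact this.abs (measurableSet_singleton 1)

lemma d_to_bd (h : ∀ᵐ ω ∂ X.Pπ, Tendsto (fun n => X.Pprod n ω * X.B n ω) atTop (nhds 0)) :
    ∀ᵐ ω ∂ X.Pπ, ∃ C : ℝ, ∀ n, |X.Pprod n ω * X.B n ω| ≤ C := by
  filter_upwards [h] with ω hω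
  obtain ⟨C, hC⟩ := hω.abs.bddAbove_range
  exact ⟨C, fun n => hC ⟨n, rfl⟩⟩

lemma e_to_d (h : ∀ᵐ ω ∂ X.Pπ, Summable fun n => |X.Pprod n ω * X.B n ω|) :
    ∀ᵐ ω ∂ X.Pπ, Tendsto (fun n => X.Pprod n ω * X.B n ω) atTop (nhds 0) := by
  filter_upwards [h] with ω hω
  exact hω.of_abs.tendsto_atTop_zero

lemma e_to_a (h : ∀ᵐ ω ∂ X.Pπ, Summable fun n => |X.Pprod n ω * X.B n ω|) :
    ∀ᵐ ω ∂ X.Pπ, Tendsto (fun n => X.Ssum n ω) atTop (nhds (X.Zinf ω)) := by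
  filter_upwards [h] with ω hω
  exact hω.of_abs.hasSum.tendsto_sum_nat

lemma conv_to_d {L : Ω → ℝ} (h : ∀ᵐ ω ∂ X.Pπ, Tendsto (fun n => X.Ssum n ω) atTop (nhds (L ω))) :
    ∀ᵐ ω ∂ X.Pπ, Tendsto (fun n => X.Pprod n ω * X.B n ω) atTop (nhds 0) := by
  filter_upwards [h] with ω hω
  have h1 := (tendsto_add_atTop_iff_nat 1).2 hω
  have h2 := h1.sub hω
  rw [sub_self] at h2
  refine h2.congr fun n => ?_
  simp [MMSetting.Ssum, Finset.sum_range_succ]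

lemma d_to_b (hA : X.Pπ {ω | X.A 0 ω = 0} = 0) (hB : X.Pπ {ω | X.B 0 ω = 0} < 1)
    (h : ∀ᵐ ω ∂ X.Pπ, Tendsto (fun n => X.Pprod n ω * X.B n ω) atTop (nhds 0)) (i : S) : Borig X i :=
  c_to_b X hA hB i (d_to_c X hA hB h i) (d_to_bd X h)

lemma ae_tau_atTop (i : S) : ∀ᵐ ω ∂ X.Pπ, Tendsto (fun n => X.tau i n ω) atTop atTop := by
  rw [ae_Ppi]
  intro j
  filter_upwards [ae_iter_hit' X i j] with ω h
  simp_rw [tau_eq X i ω h]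
  exact (rt_strictMono h).tendsto_atTop

lemma pi_to_tau (i : S) (h : ∀ᵐ ω ∂ X.Pπ, Tendsto (fun n => X.Pprod n ω) atTop (nhds 0)) :
    ∀ᵐ ω ∂ X.Pπ, Tendsto (fun n => X.Pprod (X.tau i n ω) ω) atTop (nhds 0) := by
  filter_upwards [h, ae_tau_atTop X i] with ω h1 h2
  exact h1.comp h2

lemma admissible_const (c : ℝ) : X.Admissible (fun _ => c) := by
  have := X.prob
  exact ⟨measurable_const, fun i => indepFun_const_left c _⟩

end Setting
end PerpAux

namespace Perpetuities

open MMSetting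
open PerpAux

/-- **Theorem 3.1** (a.s. convergence of backward iterations in Markovian environment).
Under the standing assumptions `P_π(A_1 = 0) = 0`, `P_π(B_1 = 0) < 1`, the assertions
(a) `Ψ_1 ∘ ⋯ ∘ Ψ_n(0) → Z_∞` a.s. (with `Z_∞` proper), (b) `Π_{τ_n(i)} → 0` a.s. and
`E_i J_i(log⁺ W^i) < ∞` for some/all `i`, (c) `P_i(|Π_{τ(i)}| = 1) < 1` for some/all `i`
and `limsup |Π_{n-1} B_n| < ∞` a.s., (d) `Π_{n-1} B_n → 0` a.s., and
(e) `∑ |Π_{n-1} B_n| < ∞` a.s. are all equivalent. Moreover, `Ψ_1 ∘ ⋯ ∘ Ψ_n(Z_0)` converges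
a.s. to a proper random variable for every admissible `Z_0` iff `Π_n → 0` a.s. and
`E_i J_i(log⁺ W^i) < ∞` for some/all `i`, in which case the limit always equals `Z_∞`. -/
theorem as_convergence_backward
    {S : Type*} [MeasurableSpace S] [MeasurableSingletonClass S] [Countable S]
    {Ω : Type*} [MeasurableSpace Ω] (X : MMSetting S Ω)
    (hA : X.Pπ {ω | X.A 0 ω = 0} = 0) (hB : X.Pπ {ω | X.B 0 ω = 0} < 1) :
    [(∀ᵐ ω ∂ X.Pπ, Tendsto (fun n => X.Ssum n ω) atTop (nhds (X.Zinf ω))),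
      (∃ i : S, (∀ᵐ ω ∂ X.Pπ, Tendsto (fun n => X.Pprod (X.tau i n ω) ω) atTop (nhds 0)) ∧
        Integrable (fun ω => X.Ji i (logplus (X.Wi i ω))) (X.P i)),
      (∀ i : S, (∀ᵐ ω ∂ X.Pπ, Tendsto (fun n => X.Pprod (X.tau i n ω) ω) atTop (nhds 0)) ∧
        Integrable (fun ω => X.Ji i (logplus (X.Wi i ω))) (X.P i)),
      ((∃ i : S, X.P i {ω | |X.Ai i ω| = 1} < 1) ∧
        ∀ᵐ ω ∂ X.Pπ, ∃ C : ℝ, ∀ n, |X.Pprod n ω * X.B n ω| ≤ C),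
      ((∀ i : S, X.P i {ω | |X.Ai i ω| = 1} < 1) ∧
        ∀ᵐ ω ∂ X.Pπ, ∃ C : ℝ, ∀ n, |X.Pprod n ω * X.B n ω| ≤ C),
      (∀ᵐ ω ∂ X.Pπ, Tendsto (fun n => X.Pprod n ω * X.B n ω) atTop (nhds 0)),
      (∀ᵐ ω ∂ X.Pπ, Summable fun n => |X.Pprod n ω * X.B n ω|)].TFAE
    ∧ ((∀ Z : Ω → ℝ, X.Admissible Z → ∃ L : Ω → ℝ,
          ∀ᵐ ω ∂ X.Pπ, Tendsto (fun n => X.Zb Z n ω) atTop (nhds (L ω))) ↔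
        ((∀ᵐ ω ∂ X.Pπ, Tendsto (fun n => X.Pprod n ω) atTop (nhds 0)) ∧
          ∀ i : S, Integrable (fun ω => X.Ji i (logplus (X.Wi i ω))) (X.P i)))
    ∧ (((∀ᵐ ω ∂ X.Pπ, Tendsto (fun n => X.Pprod n ω) atTop (nhds 0)) ∧
          ∃ i : S, Integrable (fun ω => X.Ji i (logplus (X.Wi i ω))) (X.P i)) ↔
        ((∀ᵐ ω ∂ X.Pπ, Tendsto (fun n => X.Pprod n ω) atTop (nhds 0)) ∧
          ∀ i : S, Integrable (fun ω => X.Ji i (logplus (X.Wi i ω))) (X.P i)))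
    ∧ (((∀ᵐ ω ∂ X.Pπ, Tendsto (fun n => X.Pprod n ω) atTop (nhds 0)) ∧
          ∀ i : S, Integrable (fun ω => X.Ji i (logplus (X.Wi i ω))) (X.P i)) →
        ∀ Z : Ω → ℝ, X.Admissible Z →
          ∀ᵐ ω ∂ X.Pπ, Tendsto (fun n => X.Zb Z n ω) atTop (nhds (X.Zinf ω))) := by
  have hne : Nonempty S := nonempty_S X
  have hball : ∀ i, Borig X i → ∀ j, Borig X j := fun i h j =>
    d_to_b X hA hB (e_to_d X (b_to_e X hA i h)) j
  have hconv : ((∀ᵐ ω ∂ X.Pπ, Tendsto (fun n => X.Pprod n ω) atTop (nhds 0)) ∧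
        ∀ i : S, Integrable (fun ω => X.Ji i (logplus (X.Wi i ω))) (X.P i)) →
      ∀ Z : Ω → ℝ, X.Admissible Z →
        ∀ᵐ ω ∂ X.Pπ, Tendsto (fun n => X.Zb Z n ω) atTop (nhds (X.Zinf ω)) := by
    rintro ⟨h1, h2⟩ Z _
    obtain ⟨i⟩ := hne
    have hb : Borig X i := ⟨pi_to_tau X i h1, h2 i⟩
    filter_upwards [h1, e_to_a X (b_to_e X hA i hb)] with ω h3 h4
    have := (h3.mul_const (Z ω)).add h4
    rw [zero_mul, zero_add] at this
    exact this
  refine ⟨?_, ⟨?_, fun h Z hZ => ⟨_, hconv h Z hZ⟩⟩, ⟨?_, ?_⟩, hconv⟩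
  · tfae_have 1 → 6 := fun h => conv_to_d X h
    tfae_have 7 → 1 := fun h => e_to_a X h
    tfae_have 6 → 5 := fun h => ⟨d_to_c X hA hB h, d_to_bd X h⟩
    tfae_have 5 → 4 := fun h => ⟨⟨hne.some, h.1 _⟩, h.2⟩
    tfae_have 4 → 3 := by
      rintro ⟨⟨i, h1⟩, h2⟩ j
      exact hball i (c_to_b X hA hB i h1 h2) j
    tfae_have 3 → 2 := fun h => ⟨hne.some, h _⟩
    tfae_have 2 → 7 := by
      rintro ⟨i, h⟩
      exact b_to_e X hA i h
    tfae_finish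
  · intro h
    obtain ⟨L0, h0⟩ := h _ (admissible_const X 0)
    obtain ⟨L1, h1⟩ := h _ (admissible_const X 1)
    simp only [MMSetting.Zb, mul_zero, zero_add, mul_one] at h0 h1
    have hb := d_to_b X hA hB (conv_to_d X h0)
    refine ⟨?_, fun i => (hb i).2⟩
    obtain ⟨i⟩ := hne
    filter_upwards [h0, h1, (hb i).1, ae_tau_atTop X i] with ω a b c d
    have e : Tendsto (fun n => X.Pprod n ω) atTop (nhds (L1 ω - L0 ω)) := by
      refine (b.sub a).congr fun n => ?_
      ring
    rwa [tendsto_nhds_unique (e.comp d) c] at e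
  · rintro ⟨h1, i, h2⟩
    exact ⟨h1, fun j => (hball i ⟨pi_to_tau X i h1, h2⟩ j).2⟩
  · rintro ⟨h1, h2⟩
    exact ⟨h1, hne.some, h2 _⟩

end Perpetuities
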